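/- arXiv:2303.03980 — 2 statements merged into one kernel-verified Lean document; each statement's English description precedes it below -/
import Mathlib

section
/- Let V be a leafless rooted directed tree and μ=(μ_v)_{v∈V} a weight of nonzero scalars. Suppose the unweighted backward shift B is an operator on c_0(V,μ). Then the following assertions are equivalent: (i) B is chaotic on c_0(V,μ); (ii) there is a weight μ̃ on V with (μ_v/μ̃_v)_{v∈V}∈c_0(V) such that c_∞(V(v),μ̃)<∞ for every v∈V; (iii) for every v∈V there is a weight μ̃ on V(v) with (μ_u/μ̃_u)_{u∈V(v)}∈c_0(V(v)) such that c_∞(V(v),μ̃)<∞. -/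
open scoped ENNReal NNReal Topology Classical
open Filter

namespace PaperTree

/-! ### Directed trees -/

variable {V : Type*}

/-- Iterated parent map of a directed tree given by a parent function. -/
def parIter (par : V → Option V) : ℕ → V → Option V
  | 0, v => some v
  | n + 1, v => (par v).bind (parIter par n)

/-- `par` is the parent function of a (countable, connected, acyclic) directed tree on `V`,
in which every vertex has at most one parent and at most one vertex (the root) has none. -/
structure IsDirectedTree (par : V → Option V) : Prop where
  countable : Countable V
  acyclic : ∀ (v : V) (n : ℕ), 0 < n → parIter par n v ≠ some v
  connected : ∀ u v : V, ∃ (m n : ℕ) (w : V), parIter par m u = some w ∧ parIter par n v = some w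
  root_unique : ∀ u v : V, par u = none → par v = none → u = v

/-- The set of children of `v`. -/
def children (par : V → Option V) (v : V) : Set V := {u : V | par u = some v}

/-- The set of descendants of `v` (including `v`); the rooted subtree `V(v)`. -/
def descendants (par : V → Option V) (v : V) : Set V := {u : V | ∃ n : ℕ, parIter par n u = some v}

def IsLeafV (par : V → Option V) (v : V) : Prop := children par v = ∅

def Leafless (par : V → Option V) : Prop := ∀ v : V, children par v ≠ ∅

def IsRoot (par : V → Option V) (v : V) : Prop := par v = none

def Rooted (par : V → Option V) : Prop := ∃ v : V, IsRoot par v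

def Unrooted (par : V → Option V) : Prop := ∀ v : V, par v ≠ none

/-- The tree has a free left end: some vertex all of whose (proper) ancestors
have exactly one child. -/
def HasFreeLeftEnd (par : V → Option V) : Prop :=
  ∃ v : V, ∀ n : ℕ, 1 ≤ n → ∀ w : V, parIter par n v = some w → ∃! u : V, u ∈ children par w

/-- The tree has finite length (all branches have uniformly bounded length). -/
def FiniteLength (par : V → Option V) : Prop := ∃ m : ℕ, ∀ u : V, parIter par (m + 1) u = none

/-- Product of the weights along the upward path of length `n` ending at `u`;
for `u ∈ Chi^n(v)` this is `λ(v → u)`, and `pathProd par lam n v = λ(par^n(v) → v)`. -/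
def pathProd {𝕜 : Type*} [Monoid 𝕜] (par : V → Option V) (lam : V → 𝕜) : ℕ → V → 𝕜
  | 0, _ => 1
  | n + 1, u => lam u * ((par u).elim 1 (pathProd par lam n))

/-- A (finite or infinite, maximal) branch starting at `v`, encoded with `Option`. -/
def IsOptBranch (par : V → Option V) (v : V) (b : ℕ → Option V) : Prop :=
  b 0 = some v ∧
  (∀ (k : ℕ) (w : V), b k = some w →
      (children par w = ∅ ∧ b (k + 1) = none) ∨ ∃ u ∈ children par w, b (k + 1) = some u) ∧
  ∀ k : ℕ, b k = none → b (k + 1) = none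

/-- An infinite branch starting at `v` (adequate for leafless trees). -/
def IsBranch (par : V → Option V) (v : V) (b : ℕ → V) : Prop :=
  b 0 = v ∧ ∀ k : ℕ, b (k + 1) ∈ children par (b k)

/-- The `[0,∞]`-valued absolute weight associated with a scalar weight. -/
noncomputable def nw {𝕜 : Type*} [RCLike 𝕜] (μ : V → 𝕜) : V → ℝ≥0∞ := fun v => (‖μ v‖₊ : ℝ≥0∞)

/-! ### Linear dynamics -/

section Dynamics

variable {𝕜 : Type*} [RCLike 𝕜] {X : Type*} [AddCommGroup X] [Module 𝕜 X] [TopologicalSpace X]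

/-- An operator is hypercyclic if some vector has dense orbit. -/
def Hypercyclic (T : X →L[𝕜] X) : Prop :=
  ∃ x : X, Dense (Set.range fun n : ℕ => (T ^ n) x)

/-- A periodic point of the operator `T`. -/
def IsPeriodicPoint (T : X →L[𝕜] X) (x : X) : Prop :=
  ∃ N : ℕ, 1 ≤ N ∧ (T ^ N) x = x

/-- An operator is chaotic if it is hypercyclic and has a dense set of periodic points. -/
def ChaoticOp (T : X →L[𝕜] X) : Prop :=
  Hypercyclic T ∧ Dense {x : X | IsPeriodicPoint T x}

/-- Topological mixing. -/
def MixingOp (T : X →L[𝕜] X) : Prop :=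
  ∀ U₁ U₂ : Set X, IsOpen U₁ → IsOpen U₂ → U₁.Nonempty → U₂.Nonempty →
    ∃ m : ℕ, ∀ n : ℕ, m ≤ n → ((⇑(T ^ n)) '' U₁ ∩ U₂).Nonempty

/-- Weak mixing: `T ⊕ T` is hypercyclic on `X × X`. -/
def WeaklyMixingOp (T : X →L[𝕜] X) : Prop :=
  Hypercyclic (T.prodMap T)

variable {V : Type*}

/-- `T` is (a representation via the coefficient embedding `ι` of) the weighted backward
shift `B_λ` as an operator on `X`: for every `x ∈ X` and every vertex `v` the defining
series converges unconditionally to the `v`-th coefficient of `T x`. -/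
def IsShiftRep (par : V → Option V) (lam : V → 𝕜) (ι : X →ₗ[𝕜] V → 𝕜) (T : X →L[𝕜] X) : Prop :=
  ∀ (x : X) (v : V), HasSum (fun u : ↥(children par v) => lam u.1 * ι x u.1) (ι (T x) v)

end Dynamics

/-! ### The generalized continued fractions `c_p` and resistances `r_p` -/

section Constants

/-- Conjugate exponent. -/
noncomputable def conjExp (p : ℝ) : ℝ := p / (p - 1)

variable {V : Type*}

/-- `cpAux chi w p m v` is the continued fraction `c_p` of the subtree of descendants of `v`
(with respect to the children map `chi`) truncated at depth `m`, with weight `w`. -/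
noncomputable def cpAux (chi : V → Set V) (w : V → ℝ≥0∞) (p : ℝ) : ℕ → V → ℝ≥0∞
  | 0, _ => 0
  | m + 1, v =>
      if chi v = ∅ then 0
      else (∑' u : ↥(chi v),
              (w u.1 ^ p + cpAux chi w p m u.1 ^ p) ^ (-(conjExp p / p))) ^ (-(1 / conjExp p))

/-- The continued fraction `c_p(V(v), w)` of order `1 < p < ∞`. -/
noncomputable def cpC (chi : V → Set V) (w : V → ℝ≥0∞) (p : ℝ) (v : V) : ℝ≥0∞ :=
  ⨆ m : ℕ, cpAux chi w p m v

/-- The resistance `r_p(V(v), w)` of order `1 < p < ∞`. -/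
noncomputable def rpC (chi : V → Set V) (w : V → ℝ≥0∞) (p : ℝ) (v : V) : ℝ≥0∞ :=
  (w v ^ p + cpC chi w p v ^ p) ^ (1 / p)

/-- Truncated continued fraction of order `p = ∞`. -/
noncomputable def cInfAux (chi : V → Set V) (w : V → ℝ≥0∞) : ℕ → V → ℝ≥0∞
  | 0, _ => 0
  | m + 1, v =>
      if chi v = ∅ then 0
      else (∑' u : ↥(chi v), (max (w u.1) (cInfAux chi w m u.1))⁻¹)⁻¹

/-- The continued fraction `c_∞(V(v), w)`. -/
noncomputable def cInfC (chi : V → Set V) (w : V → ℝ≥0∞) (v : V) : ℝ≥0∞ :=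
  ⨆ m : ℕ, cInfAux chi w m v

/-- The resistance `r_∞(V(v), w)`. -/
noncomputable def rInfC (chi : V → Set V) (w : V → ℝ≥0∞) (v : V) : ℝ≥0∞ :=
  max (w v) (cInfC chi w v)

end Constants

/-! ### Concrete sequence spaces `ℓ^p(V, μ)` and `c₀(V, μ)`, up to isometry -/

section SpaceRep

variable {𝕜 : Type*} [RCLike 𝕜] {V : Type*} {X : Type*} [NormedAddCommGroup X] [NormedSpace 𝕜 X]

/-- `X` is (an isometric copy of) the weighted space `ℓ^p(V, μ)`, the identification being
given by the coefficient embedding `ι`. -/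
def IsLpSpaceRep (ι : X →ₗ[𝕜] V → 𝕜) (μ : V → 𝕜) (p : ℝ) : Prop :=
  Function.Injective ι ∧
  (∀ f : V → 𝕜, (∑' v : V, (‖f v * μ v‖₊ : ℝ≥0∞) ^ p) < ⊤ ↔ f ∈ Set.range ι) ∧
  ∀ x : X, (‖x‖₊ : ℝ≥0∞) = (∑' v : V, (‖ι x v * μ v‖₊ : ℝ≥0∞) ^ p) ^ (1 / p)

/-- `X` is (an isometric copy of) the weighted space `c₀(V, μ)`. -/
def IsC0SpaceRep (ι : X →ₗ[𝕜] V → 𝕜) (μ : V → 𝕜) : Prop :=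
  Function.Injective ι ∧
  (∀ f : V → 𝕜, (∀ ε : ℝ, 0 < ε → {v : V | ε ≤ ‖f v * μ v‖}.Finite) ↔ f ∈ Set.range ι) ∧
  ∀ x : X, (‖x‖₊ : ℝ≥0∞) = ⨆ v : V, (‖ι x v * μ v‖₊ : ℝ≥0∞)

end SpaceRep

/-!
Call `f` a unit flow out of `v` if `f v = 1`, `f` lives on `V(v)`, and `f` at each vertex of `V(v)`
is the sum of its values at the children. All three assertions amount to the existence, for every
vertex `v`, of a unit flow out of `v` in `c₀(V, μ)`.

* A periodic point `x` with `x v ≠ 0` has a backward orbit with finitely many terms; reading the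
  `n`-th term on the `n`-th generation below `v` and dividing by `x v` gives such a flow.
* Given a flow, keep only its values at the depths `N, 2N, …` below `v`. For large `N` this is a
  small vector, and `e_v` plus it is `N`-periodic. As `e_v` is killed by large powers of `B`, the
  span of the `e_v` then witnesses both transitivity and the density of periodic points.
* The continued fraction and the flows are dual: if `|f| μ̃ ≤ C` for a unit flow `f` out of `v`,
  then `c_∞(V(v), μ̃) ≤ C`. Conversely, when `c_∞(V(v), μ̃) < ∞`, letting each vertex distribute
  its mass in proportion to the inverse resistances of its children gives a flow with `f μ̃`
  bounded, and then `f μ` is in `c₀` because `μ / μ̃` is.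
* To get one `μ̃` for all vertices, dominate the countably many null families `f μ` by a single null
  family `γ`, and take `μ̃ = μ / √γ`.
-/

section TendstoCofinite

variable {α E : Type*} [SeminormedAddCommGroup E]

lemma tendsto_indicator_cofinite_zero_iff {s : Set α} {g : α → E} :
    Tendsto (s.indicator g) cofinite (𝓝 0) ↔ ∀ ε : ℝ, 0 < ε → {a ∈ s | ε ≤ ‖g a‖}.Finite := by
  rw [NormedAddGroup.tendsto_nhds_zero]
  refine forall₂_congr fun ε hε => ?_
  rw [eventually_cofinite]
  refine iff_of_eq (congrArg Set.Finite (Set.ext fun a => ?_))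
  by_cases ha : a ∈ s <;> simp [ha, hε]

lemma tendsto_cofinite_zero_iff {g : α → E} :
    Tendsto g cofinite (𝓝 0) ↔ ∀ ε : ℝ, 0 < ε → {a | ε ≤ ‖g a‖}.Finite := by
  simpa using tendsto_indicator_cofinite_zero_iff (s := Set.univ) (g := g)

lemma tendsto_indicator_cofinite_zero {g : α → E} (hg : Tendsto g cofinite (𝓝 0)) (s : Set α) :
    Tendsto (s.indicator g) cofinite (𝓝 0) :=
  squeeze_zero_norm (norm_indicator_le_norm_self g) (tendsto_zero_iff_norm_tendsto_zero.1 hg)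

lemma exists_norm_le_of_tendsto_cofinite {g : α → E} (hg : Tendsto g cofinite (𝓝 0)) :
    ∃ C : ℝ, 0 < C ∧ ∀ a, ‖g a‖ ≤ C := by
  obtain ⟨C, hC⟩ := (tendsto_zero_iff_norm_tendsto_zero.1 hg).bddAbove_range_of_cofinite
  exact ⟨max C 1, by positivity, fun a => (hC ⟨a, rfl⟩).trans (le_max_left _ _)⟩

/-- Take the sum of the `‖g i‖`, scaled to be summably small. -/
lemma exists_tendsto_cofinite_zero_dominating {I : Type*} [Countable I] [Countable α]
    {g : I → α → E} (hg : ∀ i, Tendsto (g i) cofinite (𝓝 0)) :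
    ∃ γ : α → ℝ, (∀ a, 0 < γ a) ∧ Tendsto γ cofinite (𝓝 0) ∧
      ∀ i, ∃ C : ℝ, ∀ a, ‖g i a‖ ≤ C * γ a := by
  choose M hM_pos hM using fun i => exists_norm_le_of_tendsto_cofinite (hg i)
  obtain ⟨ε, hε, _, hε_sum, -⟩ := NNReal.exists_pos_sum_of_countable one_ne_zero I
  obtain ⟨η, hη, _, hη_sum, -⟩ := NNReal.exists_pos_sum_of_countable one_ne_zero α
  have hε_pos (i : I) : (0 : ℝ) < ε i := hε i
  have hε_summable : Summable fun i => (ε i : ℝ) := NNReal.summable_coe.2 hε_sum.summable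
  have hη_summable : Summable fun a => (η a : ℝ) := NNReal.summable_coe.2 hη_sum.summable
  let term (a : α) (i : I) : ℝ := ε i / M i * ‖g i a‖
  have term_nonneg (a : α) (i : I) : 0 ≤ term a i :=
    mul_nonneg (div_nonneg (hε_pos i).le (hM_pos i).le) (norm_nonneg _)
  have term_le (a : α) (i : I) : term a i ≤ ε i := by
    calc ε i / M i * ‖g i a‖ ≤ ε i / M i * M i :=
          mul_le_mul_of_nonneg_left (hM i a) (div_nonneg (hε_pos i).le (hM_pos i).le)
      _ = ε i := div_mul_cancel₀ _ (hM_pos i).ne'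
  have term_summable (a : α) : Summable (term a) :=
    hε_summable.of_nonneg_of_le (term_nonneg a) (term_le a)
  refine ⟨fun a => ∑' i, term a i + η a, fun a => ?_, ?_, fun i => ⟨M i / ε i, fun a => ?_⟩⟩
  · exact add_pos_of_nonneg_of_pos (tsum_nonneg (term_nonneg a)) (hη a)
  · have term_tendsto (i : I) : Tendsto (fun a => term a i) cofinite (𝓝 0) := by
      simpa using (tendsto_zero_iff_norm_tendsto_zero.1 (hg i)).const_mul (ε i / M i : ℝ)
    have sum_tendsto := tendsto_tsum_of_dominated_convergence hε_summable term_tendsto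
      (Eventually.of_forall fun a i =>
        (Real.norm_of_nonneg (term_nonneg a i)).trans_le (term_le a i))
    simpa using sum_tendsto.add hη_summable.tendsto_cofinite_zero
  · rw [div_mul_eq_mul_div, le_div_iff₀ (hε_pos i)]
    calc ‖g i a‖ * ε i = M i * term a i := by
          simp only [term]
          field_simp [(hM_pos i).ne']
      _ ≤ M i * (∑' j, term a j + η a) := by
          gcongr
          · exact (hM_pos i).le
          · exact le_add_of_le_of_nonneg
              ((term_summable a).le_tsum i fun j _ => term_nonneg a j) (η a).2

end TendstoCofinite

section Tree

variable {par : V → Option V} {u v p : V}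

lemma mem_descendants_self (par : V → Option V) (v : V) : v ∈ descendants par v := ⟨0, rfl⟩

lemma mem_descendants_of_mem_children (hp : p ∈ descendants par v) (hu : u ∈ children par p) :
    u ∈ descendants par v := by
  obtain ⟨n, hn⟩ := hp
  have hup : par u = some p := hu
  exact ⟨n + 1, by simp [parIter, hup, hn]⟩

lemma mem_descendants_of_child_mem (hu : u ∈ descendants par v) (hup : u ∈ children par p)
    (hne : u ≠ v) : p ∈ descendants par v := by
  obtain ⟨_ | n, hn⟩ := hu
  · exact absurd (Option.some.inj hn) hne
  · have hpar : par u = some p := hup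
    exact ⟨n, by simpa [parIter, hpar] using hn⟩

lemma descendants_induction {P : V → Prop} (self : P v)
    (child : ∀ p ∈ descendants par v, P p → ∀ u ∈ children par p, P u) :
    ∀ u ∈ descendants par v, P u := by
  rintro u ⟨n, hn⟩
  induction n generalizing u with
  | zero => exact Option.some.inj hn ▸ self
  | succ n ih =>
    obtain ⟨p, hup, hp⟩ := Option.bind_eq_some_iff.1 hn
    exact child p ⟨n, hp⟩ (ih p hp) u hup

/-- A depth function: it increases by one from each vertex to its children. Having one makes the
graph a forest of rooted trees, as every chain of successive parents must stop. -/
def IsDepth (par : V → Option V) (dep : V → ℕ) : Prop :=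
  ∀ u v, par u = some v → dep u = dep v + 1

lemma IsDepth.eq_add {dep : V → ℕ} (hdep : IsDepth par dep) {n : ℕ}
    (h : parIter par n u = some v) : dep u = dep v + n := by
  induction n generalizing u with
  | zero => rw [Option.some.inj h, add_zero]
  | succ n ih =>
    obtain ⟨p, hup, hp⟩ := Option.bind_eq_some_iff.1 h
    rw [hdep u p hup, ih hp, add_assoc]

lemma IsDepth.parIter_eq_none {dep : V → ℕ} (hdep : IsDepth par dep) {n : ℕ} (hn : dep u < n) :
    parIter par n u = none := by
  refine Option.eq_none_iff_forall_ne_some.2 fun w hw => ?_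
  have := hdep.eq_add hw
  omega

lemma IsDepth.eq_of_mem_descendants {dep : V → ℕ} (hdep : IsDepth par dep)
    (hu : u ∈ descendants par v) (h : dep u = dep v) : u = v := by
  obtain ⟨n, hn⟩ := hu
  obtain rfl : n = 0 := by have := hdep.eq_add hn; omega
  exact Option.some.inj hn

lemma IsDirectedTree.exists_isDepth (hTree : IsDirectedTree par) {root : V}
    (hroot : IsRoot par root) : ∃ dep : V → ℕ, IsDepth par dep := by
  have root_par : ∀ n w, parIter par n root = some w → w = root
    | 0, _, h => (Option.some.inj h).symm
    | n + 1, w, h => by simp [parIter, show par root = none from hroot] at h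
  have reaches_root (v : V) : ∃ n, parIter par n v = some root := by
    obtain ⟨m, n, w, hrw, hvw⟩ := hTree.connected root v
    exact ⟨n, root_par m w hrw ▸ hvw⟩
  refine ⟨fun v => Nat.find (reaches_root v), fun u v huv => ?_⟩
  refine (Nat.find_comp_succ (reaches_root u) ⟨Nat.find (reaches_root v), ?_⟩ ?_).trans ?_
  · simpa [parIter, huv] using Nat.find_spec (reaches_root v)
  · intro h
    obtain rfl : u = root := Option.some.inj h
    exact absurd (huv.symm.trans hroot) (by simp)
  · simp [parIter, huv]

end Tree

section Flow

variable {par : V → Option V} {v : V}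

/-- A unit flow out of `v`: it carries mass `1` at `v`, is supported in the subtree `V(v)`, and at
every vertex of that subtree its value is split among the children; in other words `f v = 1` and
`B f = f` on `V(v)`. -/
structure IsUnitFlow {M : Type*} [AddCommMonoid M] [One M] [TopologicalSpace M]
    (par : V → Option V) (v : V) (f : V → M) : Prop where
  self : f v = 1
  eq_zero : ∀ u ∉ descendants par v, f u = 0
  hasSum : ∀ u ∈ descendants par v, HasSum (fun w : ↥(children par u) => f w) (f u)

/-- There is a unit flow out of `v` belonging to `c₀(V, μ)`. -/
def HasC0Flow {𝕜 : Type*} [RCLike 𝕜] (par : V → Option V) (μ : V → 𝕜) (v : V) : Prop :=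
  ∃ f : V → 𝕜, IsUnitFlow par v f ∧ Tendsto (fun u => f u * μ u) cofinite (𝓝 0)

lemma IsUnitFlow.enorm_le_tsum {E : Type*} [NormedAddCommGroup E] [One E]
    {f : V → E} (hf : IsUnitFlow par v f) (u : V) :
    ‖f u‖ₑ ≤ ∑' w : ↥(children par u), ‖f w‖ₑ := by
  by_cases hu : u ∈ descendants par v
  · rw [← (hf.hasSum u hu).tsum_eq]
    exact enorm_tsum_le_tsum_enorm
  · rw [hf.eq_zero u hu, enorm_zero]
    exact zero_le

lemma IsUnitFlow.ofReal_toReal {𝕜 : Type*} [RCLike 𝕜] {f : V → ℝ≥0∞} (hf : IsUnitFlow par v f)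
    (hf_top : ∀ u, f u ≠ ⊤) : IsUnitFlow par v fun u => ((f u).toReal : 𝕜) where
  self := by simp [hf.self]
  eq_zero u hu := by simp [hf.eq_zero u hu]
  hasSum u hu := by
    have hsum := (hf.hasSum u hu).tsum_eq
    rw [RCLike.hasSum_ofReal, ← hsum, ENNReal.tsum_toReal_eq fun w : ↥(children par u) => hf_top w]
    exact ENNReal.hasSum_toReal (hsum ▸ hf_top u)

/-- Weak duality between flows and continued fractions, by induction on the truncation depth: the
bounds `φ ≤ C / r` at the children sum to `φ u ≤ C * S`, and `S⁻¹` is the next truncation. -/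
lemma cInfC_mul_le {chi : V → Set V} {w φ : V → ℝ≥0∞} {C : ℝ≥0∞}
    (hφ : ∀ u, φ u ≤ ∑' x : ↥(chi u), φ x) (hC : ∀ u, w u * φ u ≤ C) (v : V) :
    cInfC chi w v * φ v ≤ C := by
  rcases eq_or_ne C ⊤ with rfl | hC_top
  · exact le_top
  have aux_mul_le (m : ℕ) : ∀ u, cInfAux chi w m u * φ u ≤ C := by
    induction m with
    | zero => simp [cInfAux]
    | succ m ih =>
      intro u
      rw [cInfAux]
      split_ifs with hu
      · simp
      set r : ↥(chi u) → ℝ≥0∞ := fun x => max (w x) (cInfAux chi w m x)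
      set S : ℝ≥0∞ := ∑' x, (r x)⁻¹
      rcases eq_or_ne S ⊤ with hS | hS
      · simp [hS]
      have φ_child_le (x : ↥(chi u)) : φ x ≤ C * (r x)⁻¹ := by
        have hr : r x ≠ 0 := ENNReal.inv_ne_top.1 (ENNReal.ne_top_of_tsum_ne_top hS x)
        rw [← div_eq_mul_inv, ENNReal.le_div_iff_mul_le (Or.inl hr) (Or.inr hC_top), mul_comm,
          max_mul]
        exact max_le (hC x) (ih x)
      calc S⁻¹ * φ u ≤ S⁻¹ * ∑' x : ↥(chi u), C * (r x)⁻¹ := by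
            gcongr
            exact (hφ u).trans (ENNReal.tsum_le_tsum φ_child_le)
        _ = C * (S * S⁻¹) := by rw [ENNReal.tsum_mul_left]; ring
        _ ≤ C := mul_le_of_le_one_right' (ENNReal.mul_inv_le_one S)
  rw [cInfC, ENNReal.iSup_mul]
  exact iSup_le fun m => aux_mul_le m v

/-- Dominate the families `f i * μ` by a single null family `γ`; then `μ / √γ` still keeps all the
flows bounded, while `μ / (μ / √γ) = √γ` tends to zero. -/
lemma exists_weight_of_hasC0Flow {𝕜 I : Type*} [RCLike 𝕜] [Countable I] [Countable V]
    {μ : V → 𝕜} (hμ : ∀ v, μ v ≠ 0) {v : I → V} (hflow : ∀ i, HasC0Flow par μ (v i)) :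
    ∃ μt : V → 𝕜, (∀ u, μt u ≠ 0) ∧ Tendsto (fun u => μ u / μt u) cofinite (𝓝 0) ∧
      ∀ i, cInfC (children par) (nw μt) (v i) < ⊤ := by
  choose f hf hf_tendsto using hflow
  obtain ⟨γ, hγ_pos, hγ, hγ_dom⟩ := exists_tendsto_cofinite_zero_dominating hf_tendsto
  have hsqrt_pos (u : V) : 0 < √(γ u) := Real.sqrt_pos.2 (hγ_pos u)
  have hsqrt_ne (u : V) : ((√(γ u) : ℝ) : 𝕜) ≠ 0 := RCLike.ofReal_ne_zero.2 (hsqrt_pos u).ne'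
  have hsqrt : Tendsto (fun u => √(γ u)) cofinite (𝓝 0) := by
    simpa using hγ.sqrt
  refine ⟨fun u => μ u / (√(γ u) : ℝ), fun u => div_ne_zero (hμ u) (hsqrt_ne u), ?_, fun i => ?_⟩
  · simp only [div_div_cancel₀ (hμ _)]
    exact_mod_cast (RCLike.continuous_ofReal (K := 𝕜).tendsto 0).comp hsqrt
  · obtain ⟨D, -, hD⟩ := exists_norm_le_of_tendsto_cofinite hsqrt
    obtain ⟨C, hC⟩ := hγ_dom i
    have flow_bounded (u : V) : ‖μ u / (√(γ u) : ℝ)‖ * ‖f i u‖ ≤ |C| * D := by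
      calc ‖μ u / ((√(γ u) : ℝ) : 𝕜)‖ * ‖f i u‖ = ‖f i u * μ u‖ / √(γ u) := by
            rw [norm_div, RCLike.norm_ofReal, abs_of_pos (hsqrt_pos u), norm_mul]; ring
        _ ≤ |C| * γ u / √(γ u) := by
            gcongr
            exact (hC u).trans (mul_le_mul_of_nonneg_right (le_abs_self C) (hγ_pos u).le)
        _ = |C| * √(γ u) := by rw [mul_div_assoc, Real.div_sqrt]
        _ ≤ |C| * D := by
            gcongr
            exact (Real.le_norm_self _).trans (hD u)
    have h := cInfC_mul_le (w := nw fun u => μ u / ((√(γ u) : ℝ) : 𝕜))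
      (hf i).enorm_le_tsum (C := ENNReal.ofReal (|C| * D)) (fun u => by
        rw [nw, ← enorm_eq_nnnorm, ← enorm_mul, ← ofReal_norm, norm_mul]
        exact ENNReal.ofReal_le_ofReal (flow_bounded u)) (v i)
    rw [(hf i).self, enorm_one, mul_one] at h
    exact h.trans_lt ENNReal.ofReal_lt_top

end Flow

section ContinuedFraction

lemma monotone_cInfAux (chi : V → Set V) (w : V → ℝ≥0∞) (v : V) :
    Monotone fun m => cInfAux chi w m v := by
  refine monotone_nat_of_le_succ fun m => ?_
  induction m generalizing v with
  | zero => simp [cInfAux]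
  | succ m ih =>
    rw [cInfAux.eq_2 chi w v m, cInfAux.eq_2 chi w v (m + 1)]
    split_ifs with h
    · exact le_rfl
    · exact ENNReal.inv_le_inv.2 (ENNReal.tsum_le_tsum fun u =>
        ENNReal.inv_le_inv.2 (max_le_max le_rfl (ih u)))

lemma tsum_iInf_eq_iInf_tsum {α : Type*} {f : ℕ → α → ℝ≥0∞} (hf : Antitone f)
    (h0 : ∑' a, f 0 a ≠ ⊤) : ∑' a, ⨅ n, f n a = ⨅ n, ∑' a, f n a := by
  let _ : MeasurableSpace α := ⊤
  simpa only [MeasureTheory.lintegral_count' measurable_from_top] using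
    MeasureTheory.lintegral_iInf (μ := .count) (fun n => measurable_from_top) hf
      (by rwa [MeasureTheory.lintegral_count' measurable_from_top])

lemma inv_tsum_inv_rInfC_le_cInfC {chi : V → Set V} {w : V → ℝ≥0∞} {v : V} (hv : chi v ≠ ∅)
    (hw : ∑' u : ↥(chi v), (w u)⁻¹ ≠ ⊤) :
    (∑' u : ↥(chi v), (rInfC chi w u)⁻¹)⁻¹ ≤ cInfC chi w v := by
  let ρ (m : ℕ) (u : ↥(chi v)) : ℝ≥0∞ := (max (w u) (cInfAux chi w m u))⁻¹
  have hρ : Antitone ρ := fun m n hmn u =>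
    ENNReal.inv_le_inv.2 (max_le_max le_rfl (monotone_cInfAux chi w u hmn))
  have inv_rInfC (u : ↥(chi v)) : (rInfC chi w u)⁻¹ = ⨅ m, ρ m u := by
    rw [← ENNReal.inv_iSup, rInfC, cInfC, sup_iSup]
  rw [tsum_congr inv_rInfC, tsum_iInf_eq_iInf_tsum hρ (by simpa [ρ, cInfAux] using hw),
    ENNReal.inv_iInf]
  refine iSup_le fun m => ?_
  refine le_trans ?_ (le_iSup (fun m => cInfAux chi w m v) (m + 1))
  simp [cInfAux, hv, ρ]

end ContinuedFraction

section BranchProd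

variable {M : Type*} [MonoidWithZero M] {par : V → Option V} {dep : V → ℕ} {u v p : V}

/-- The product of `q` along the path from `v` (excluded) down to `u`, extended by zero outside
the subtree `V(v)`; the length of the path is read off the depth function. -/
noncomputable def branchProd (par : V → Option V) (dep : V → ℕ) (q : V → M) (v u : V) : M :=
  if u ∈ descendants par v then pathProd par q (dep u - dep v) u else 0

lemma branchProd_self (q : V → M) : branchProd par dep q v v = 1 := by
  simp [branchProd, mem_descendants_self, pathProd]

lemma branchProd_of_notMem (q : V → M) (hu : u ∉ descendants par v) :
    branchProd par dep q v u = 0 :=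
  if_neg hu

lemma IsDepth.branchProd_child (hdep : IsDepth par dep) (q : V → M) (hp : p ∈ descendants par v)
    (hu : u ∈ children par p) :
    branchProd par dep q v u = q u * branchProd par dep q v p := by
  have hpar : par u = some p := hu
  have depth_diff : dep u - dep v = dep p - dep v + 1 := by
    obtain ⟨n, hn⟩ := id hp
    rw [hdep u p hpar, hdep.eq_add hn]
    omega
  simp [branchProd, hp, mem_descendants_of_mem_children hp hu, depth_diff, pathProd, hpar]

end BranchProd

section ResistanceFlow

variable {par : V → Option V} {dep : V → ℕ} {w : V → ℝ≥0∞} {u v p : V}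

/-- The total conductance of the children of `p`: the sum of the inverse resistances of the
subtrees rooted at them. -/
noncomputable def conductance (par : V → Option V) (w : V → ℝ≥0∞) (p : V) : ℝ≥0∞ :=
  ∑' u : ↥(children par p), (rInfC (children par) w u)⁻¹

/-- The flow out of `v` that each vertex distributes among its children proportionally to the
inverse resistances of their subtrees. -/
noncomputable def resistanceFlow (par : V → Option V) (dep : V → ℕ) (w : V → ℝ≥0∞) :
    V → V → ℝ≥0∞ :=
  branchProd par dep fun u =>
    (rInfC (children par) w u)⁻¹ * (par u).elim 0 fun p => (conductance par w p)⁻¹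

lemma IsDepth.resistanceFlow_child (hdep : IsDepth par dep) (hp : p ∈ descendants par v)
    (hu : u ∈ children par p) :
    resistanceFlow par dep w v u =
      resistanceFlow par dep w v p * (conductance par w p)⁻¹ * (rInfC (children par) w u)⁻¹ := by
  have hpar : par u = some p := hu
  rw [resistanceFlow, hdep.branchProd_child _ hp hu, hpar, Option.elim_some]
  ring

lemma IsDepth.resistanceFlow_mul_rInfC_le (hdep : IsDepth par dep)
    (hcond : ∀ p ∈ descendants par v, (conductance par w p)⁻¹ ≤ cInfC (children par) w p) (u : V) :
    resistanceFlow par dep w v u * rInfC (children par) w u ≤ rInfC (children par) w v := by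
  set r := rInfC (children par) w
  set φ := resistanceFlow par dep w v
  by_cases hu : u ∈ descendants par v
  · refine descendants_induction (P := fun u => φ u * r u ≤ r v) ?_ (fun p hp ih u hu => ?_) u hu
    · rw [show φ v = 1 from branchProd_self _, one_mul]
    · calc φ u * r u = φ p * (conductance par w p)⁻¹ * (r u * (r u)⁻¹) := by
            rw [show φ u = _ from hdep.resistanceFlow_child hp hu]; ring
        _ ≤ φ p * (conductance par w p)⁻¹ := mul_le_of_le_one_right' (ENNReal.mul_inv_le_one _)
        _ ≤ φ p * r p := by
            gcongr
            exact (hcond p hp).trans (le_max_right _ _)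
        _ ≤ r v := ih
  · rw [show φ u = 0 from branchProd_of_notMem _ hu, zero_mul]
    exact zero_le

lemma IsDepth.isUnitFlow_resistanceFlow (hdep : IsDepth par dep)
    (hcond : ∀ p ∈ descendants par v, (conductance par w p)⁻¹ ≤ cInfC (children par) w p)
    (hcond_ne_top : ∀ p ∈ descendants par v, conductance par w p ≠ ⊤)
    (hv : rInfC (children par) w v ≠ ⊤) : IsUnitFlow par v (resistanceFlow par dep w v) where
  self := branchProd_self _
  eq_zero _ hu := branchProd_of_notMem _ hu
  hasSum p hp := by
    set φ := resistanceFlow par dep w v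
    rw [ENNReal.summable.hasSum_iff]
    calc ∑' u : ↥(children par p), φ u
        = φ p * (conductance par w p)⁻¹ * conductance par w p := by
          rw [tsum_congr fun u => hdep.resistanceFlow_child hp u.2, ENNReal.tsum_mul_left]
          rfl
      _ = φ p := ?_
    rcases eq_or_ne (conductance par w p) 0 with h0 | h0
    · -- A vertex of zero conductance has infinite resistance, so no mass arrives there.
      have rInfC_eq_top : rInfC (children par) w p = ⊤ := by
        have := hcond p hp
        rw [h0, ENNReal.inv_zero, top_le_iff] at this
        simp [rInfC, this]
      have φ_zero : φ p = 0 := by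
        by_contra hne
        have := hdep.resistanceFlow_mul_rInfC_le hcond p
        rw [rInfC_eq_top, ENNReal.mul_top hne, top_le_iff] at this
        exact hv this
      simp [φ_zero]
    · rw [mul_assoc, ENNReal.inv_mul_cancel h0 (hcond_ne_top p hp), mul_one]

lemma IsDepth.exists_isUnitFlow_mul_le (hdep : IsDepth par dep) (hLeafless : Leafless par)
    (hw : ∀ p ∈ descendants par v, ∑' u : ↥(children par p), (w u)⁻¹ ≠ ⊤)
    (hv : rInfC (children par) w v ≠ ⊤) :
    ∃ φ : V → ℝ≥0∞, IsUnitFlow par v φ ∧ ∀ u, φ u * w u ≤ rInfC (children par) w v := by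
  have cond_ne_top : ∀ p ∈ descendants par v, conductance par w p ≠ ⊤ := fun p hp =>
    ne_top_of_le_ne_top (hw p hp)
      (ENNReal.tsum_le_tsum fun u => ENNReal.inv_le_inv.2 (le_max_left _ _))
  have inv_cond_le : ∀ p ∈ descendants par v,
      (conductance par w p)⁻¹ ≤ cInfC (children par) w p := fun p hp =>
    inv_tsum_inv_rInfC_le_cInfC (hLeafless p) (hw p hp)
  exact ⟨_, hdep.isUnitFlow_resistanceFlow inv_cond_le cond_ne_top hv, fun u =>
    (mul_le_mul_right (le_max_left _ _) _).trans (hdep.resistanceFlow_mul_rInfC_le inv_cond_le u)⟩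

lemma tsum_inv_enorm_ne_top_of_div_le {α 𝕜 : Type*} [NormedField 𝕜] {μ μt : α → 𝕜} {C : ℝ≥0∞}
    (hC : C ≠ ⊤) (hμ : ∀ a, μ a ≠ 0) (hμt : ∀ a, μt a ≠ 0) (hle : ∀ a, ‖μ a / μt a‖ₑ ≤ C)
    (hsum : ∑' a, ‖μ a‖ₑ⁻¹ ≠ ⊤) : ∑' a, ‖μt a‖ₑ⁻¹ ≠ ⊤ := by
  refine ne_top_of_le_ne_top (ENNReal.mul_ne_top hC hsum) ?_
  rw [← ENNReal.tsum_mul_left]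
  refine ENNReal.tsum_le_tsum fun a => ?_
  calc ‖μt a‖ₑ⁻¹ = ‖μ a / μt a‖ₑ * ‖μ a‖ₑ⁻¹ := by
        rw [← enorm_inv (hμ a), ← enorm_inv (hμt a), ← enorm_mul]
        congr 1
        field_simp [hμ a]
    _ ≤ C * ‖μ a‖ₑ⁻¹ := by gcongr; exact hle a

lemma IsUnitFlow.hasC0Flow_of_mul_nw_le {𝕜 : Type*} [RCLike 𝕜] {μ μt : V → 𝕜} {φ : V → ℝ≥0∞}
    {R : ℝ≥0∞} (hφ : IsUnitFlow par v φ) (hR : R ≠ ⊤) (hle : ∀ u, φ u * nw μt u ≤ R)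
    (hμt : ∀ u ∈ descendants par v, μt u ≠ 0)
    (hdiv : Tendsto ((descendants par v).indicator fun u => μ u / μt u) cofinite (𝓝 0)) :
    HasC0Flow par μ v := by
  have φ_ne_top (u : V) : φ u ≠ ⊤ := by
    by_cases hu : u ∈ descendants par v
    · have nw_ne_zero : nw μt u ≠ 0 := by simpa [nw] using hμt u hu
      intro h
      exact hR (top_le_iff.1 (by simpa [h, ENNReal.top_mul nw_ne_zero] using hle u))
    · simp [hφ.eq_zero u hu]
  refine ⟨_, hφ.ofReal_toReal φ_ne_top, ?_⟩
  refine squeeze_zero_norm (fun u => ?_) (by simpa using hdiv.norm.const_mul R.toReal)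
  by_cases hu : u ∈ descendants par v
  · have mul_norm_le := ENNReal.toReal_mono hR (hle u)
    rw [ENNReal.toReal_mul, nw, ENNReal.coe_toReal, coe_nnnorm] at mul_norm_le
    calc ‖((φ u).toReal : 𝕜) * μ u‖ = (φ u).toReal * ‖μt u‖ * ‖μ u / μt u‖ := by
          rw [norm_mul, RCLike.norm_ofReal, abs_of_nonneg ENNReal.toReal_nonneg, mul_assoc,
            ← norm_mul, mul_div_cancel₀ _ (hμt u hu)]
      _ ≤ R.toReal * ‖(descendants par v).indicator (fun u => μ u / μt u) u‖ := by
          rw [Set.indicator_of_mem hu]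
          gcongr
  · simp [hφ.eq_zero u hu, hu]

lemma IsDepth.hasC0Flow_of_cInfC_lt_top {𝕜 : Type*} [RCLike 𝕜] (hdep : IsDepth par dep)
    (hLeafless : Leafless par) {μ μt : V → 𝕜} (hμ : ∀ u, μ u ≠ 0)
    (hsum : ∀ p, ∑' u : ↥(children par p), ‖μ u‖ₑ⁻¹ ≠ ⊤)
    (hμt : ∀ u ∈ descendants par v, μt u ≠ 0)
    (hdiv : Tendsto ((descendants par v).indicator fun u => μ u / μt u) cofinite (𝓝 0))
    (hfin : cInfC (children par) (nw μt) v < ⊤) : HasC0Flow par μ v := by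
  obtain ⟨K, -, hK⟩ := exists_norm_le_of_tendsto_cofinite hdiv
  have tsum_inv_ne_top : ∀ p ∈ descendants par v,
      ∑' u : ↥(children par p), (nw μt u)⁻¹ ≠ ⊤ := by
    intro p hp
    have mem_desc (u : ↥(children par p)) := mem_descendants_of_mem_children hp u.2
    refine tsum_inv_enorm_ne_top_of_div_le (μ := fun u : ↥(children par p) => μ u)
      (μt := fun u => μt u) (ENNReal.ofReal_ne_top (r := K)) (fun u => hμ u)
      (fun u => hμt u (mem_desc u)) (fun u => ?_) (hsum p)
    rw [← ofReal_norm]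
    exact ENNReal.ofReal_le_ofReal (by simpa [mem_desc u] using hK u)
  have rInfC_ne_top : rInfC (children par) (nw μt) v ≠ ⊤ := (max_lt ENNReal.coe_lt_top hfin).ne
  obtain ⟨φ, hφ, mul_le⟩ := hdep.exists_isUnitFlow_mul_le hLeafless tsum_inv_ne_top rInfC_ne_top
  exact hφ.hasC0Flow_of_mul_nw_le rInfC_ne_top mul_le hμt hdiv

end ResistanceFlow

section Chaos

variable {𝕜 : Type*} [RCLike 𝕜] {X : Type*} [AddCommGroup X] [Module 𝕜 X] [TopologicalSpace X]

lemma hypercyclic_of_transitive [BaireSpace X] [SecondCountableTopology X] {T : X →L[𝕜] X}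
    (hT : ∀ U W : Set X, IsOpen U → IsOpen W → U.Nonempty → W.Nonempty →
      ∃ n : ℕ, ∃ x ∈ U, (T ^ n) x ∈ W) :
    Hypercyclic T := by
  obtain ⟨B, hB_countable, hB_empty, hB⟩ := TopologicalSpace.exists_countable_basis X
  have := hB_countable.to_subtype
  have dense_visits : Dense (⋂ W : B, ⋃ n : ℕ, ⇑(T ^ n) ⁻¹' W) := by
    refine dense_iInter_of_isOpen
      (fun W => isOpen_iUnion fun n => (hB.isOpen W.2).preimage (T ^ n).continuous)
      fun W => dense_iff_inter_open.2 fun U hU hU_ne => ?_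
    have hW_ne : (W : Set X).Nonempty :=
      Set.nonempty_iff_ne_empty.2 fun h => hB_empty (h ▸ W.2)
    obtain ⟨n, x, hxU, hxW⟩ := hT U W hU (hB.isOpen W.2) hU_ne hW_ne
    exact ⟨x, hxU, Set.mem_iUnion.2 ⟨n, hxW⟩⟩
  obtain ⟨x, hx⟩ := dense_visits.nonempty
  refine ⟨x, hB.dense_iff.2 fun W hW _ => ?_⟩
  obtain ⟨n, hn⟩ := Set.mem_iUnion.1 (Set.mem_iInter.1 hx ⟨W, hW⟩)
  exact ⟨(T ^ n) x, hn, n, rfl⟩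

variable [IsTopologicalAddGroup X] [ContinuousConstSMul 𝕜 X]

/-- The vectors `x` killed by the large powers of `T` that admit perturbations `t n → 0` making
`x + t n` a point of period `n`, for all large `n`. -/
def periodicallyPerturbable (T : X →L[𝕜] X) : Submodule 𝕜 X where
  carrier := {x | ∃ t : ℕ → X, Tendsto t atTop (𝓝 0) ∧
    ∀ᶠ n in atTop, (T ^ n) x = 0 ∧ (T ^ n) (t n) = x + t n}
  zero_mem' := ⟨0, tendsto_const_nhds, by simp⟩
  add_mem' := by
    rintro x y ⟨s, hs, hx⟩ ⟨t, ht, hy⟩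
    refine ⟨s + t, add_zero (0 : X) ▸ hs.add ht, ?_⟩
    filter_upwards [hx, hy] with n ⟨hx_zero, hs_pow⟩ ⟨hy_zero, ht_pow⟩
    simp only [map_add, hx_zero, hy_zero, hs_pow, ht_pow, Pi.add_apply, add_zero, true_and]
    abel
  smul_mem' := by
    rintro c x ⟨t, ht, hx⟩
    refine ⟨c • t, smul_zero (A := X) c ▸ ht.const_smul c, ?_⟩
    filter_upwards [hx] with n ⟨hx_zero, ht_pow⟩
    simp [hx_zero, ht_pow]

lemma chaoticOp_of_dense_periodicallyPerturbable [BaireSpace X] [SecondCountableTopology X]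
    {T : X →L[𝕜] X} (hdense : Dense (periodicallyPerturbable T : Set X)) : ChaoticOp T := by
  refine ⟨hypercyclic_of_transitive fun U W hU hW hU_ne hW_ne => ?_, ?_⟩
  · obtain ⟨x, hx, hxU⟩ := hdense.exists_mem_open hU hU_ne
    obtain ⟨y, hy, hyW⟩ := hdense.exists_mem_open hW hW_ne
    obtain ⟨s, -, hs⟩ := hx
    obtain ⟨t, ht, hyt⟩ := hy
    have start_in_U : ∀ᶠ n in atTop, x + t n ∈ U :=
      (by simpa using ht.const_add x : Tendsto (fun n => x + t n) atTop (𝓝 x)) (hU.mem_nhds hxU)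
    have end_in_W : ∀ᶠ n in atTop, y + t n ∈ W :=
      (by simpa using ht.const_add y : Tendsto (fun n => y + t n) atTop (𝓝 y)) (hW.mem_nhds hyW)
    obtain ⟨n, hnU, hnW, hxn, hyn⟩ :=
      (start_in_U.and (end_in_W.and (hs.and hyt))).exists
    refine ⟨n, x + t n, hnU, ?_⟩
    rwa [map_add, hxn.1, zero_add, hyn.2]
  · refine Dense.of_closure (hdense.mono ?_)
    rintro x ⟨t, ht, hx⟩
    refine mem_closure_of_tendsto (by simpa using ht.const_add x) ?_
    filter_upwards [hx, eventually_ge_atTop 1] with n ⟨hx_zero, ht_pow⟩ hn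
    exact ⟨n, hn, by rw [map_add, hx_zero, ht_pow, zero_add]⟩

end Chaos

section C0SpaceRep

variable {𝕜 : Type*} [RCLike 𝕜] {X : Type*} [NormedAddCommGroup X] [NormedSpace 𝕜 X]
  {ι : X →ₗ[𝕜] V → 𝕜} {μ : V → 𝕜}

namespace IsC0SpaceRep

lemma norm_coeff_mul_le (hX : IsC0SpaceRep ι μ) (x : X) (v : V) : ‖ι x v * μ v‖ ≤ ‖x‖ := by
  have h := le_iSup (fun v => (‖ι x v * μ v‖₊ : ℝ≥0∞)) v
  rw [← hX.2.2 x] at h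
  exact_mod_cast h

lemma norm_le (hX : IsC0SpaceRep ι μ) {x : X} {C : ℝ} (hC : 0 ≤ C)
    (h : ∀ v, ‖ι x v * μ v‖ ≤ C) : ‖x‖ ≤ C := by
  lift C to ℝ≥0 using hC
  have : (‖x‖₊ : ℝ≥0∞) ≤ C := by
    rw [hX.2.2 x]
    exact iSup_le fun v => by exact_mod_cast h v
  exact_mod_cast this

lemma tendsto_coeff_mul (hX : IsC0SpaceRep ι μ) (x : X) :
    Tendsto (fun v => ι x v * μ v) cofinite (𝓝 0) :=
  tendsto_cofinite_zero_iff.2 ((hX.2.1 _).2 ⟨x, rfl⟩)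

lemma exists_eq (hX : IsC0SpaceRep ι μ) {f : V → 𝕜}
    (hf : Tendsto (fun v => f v * μ v) cofinite (𝓝 0)) : ∃ x, ι x = f :=
  (hX.2.1 f).1 (tendsto_cofinite_zero_iff.1 hf)

lemma exists_eq_indicator (hX : IsC0SpaceRep ι μ) {f : V → 𝕜}
    (hf : Tendsto (fun v => f v * μ v) cofinite (𝓝 0)) (A : Set V) : ∃ x, ι x = A.indicator f := by
  exact hX.exists_eq ((tendsto_indicator_cofinite_zero hf A).congr fun v =>
    Set.indicator_mul_left A f μ)

lemma continuous_coeff (hX : IsC0SpaceRep ι μ) {v : V} (hv : μ v ≠ 0) :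
    Continuous fun x => ι x v := by
  refine AddMonoidHomClass.continuous_of_bound ((LinearMap.proj v).comp ι) ‖μ v‖⁻¹ fun x => ?_
  rw [inv_mul_eq_div, le_div_iff₀ (norm_pos_iff.2 hv), ← norm_mul]
  exact hX.norm_coeff_mul_le x v

lemma exists_single (hX : IsC0SpaceRep ι μ) (v : V) : ∃ x, ι x = Pi.single v 1 := by
  refine hX.exists_eq (tendsto_nhds_of_eventually_eq ?_)
  filter_upwards [(Set.finite_singleton v).compl_mem_cofinite] with u hu
  simp [Pi.single_eq_of_ne hu]

/-- The vector of `X` corresponding to the indicator function of the vertex `v`. -/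
noncomputable def single (hX : IsC0SpaceRep ι μ) (v : V) : X := (hX.exists_single v).choose

lemma coeff_single (hX : IsC0SpaceRep ι μ) (v : V) : ι (hX.single v) = Pi.single v 1 :=
  (hX.exists_single v).choose_spec

lemma tendsto_zero_of_indicator (hX : IsC0SpaceRep ι μ) {f : V → 𝕜}
    (hf : Tendsto (fun v => f v * μ v) cofinite (𝓝 0)) {A : ℕ → Set V}
    (hA : ∀ v, ∀ᶠ n in atTop, v ∉ A n) {t : ℕ → X} (ht : ∀ n, ι (t n) = (A n).indicator f) :
    Tendsto t atTop (𝓝 0) := by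
  refine NormedAddGroup.tendsto_nhds_zero.2 fun ε hε => ?_
  have large_finite := tendsto_cofinite_zero_iff.1 hf (ε / 2) (half_pos hε)
  filter_upwards [(eventually_all_finite large_finite).2 fun v _ => hA v] with n hn
  refine (hX.norm_le (half_pos hε).le fun v => ?_).trans_lt (half_lt_self hε)
  by_cases hv : v ∈ A n
  · simpa [ht, hv] using (not_le.1 fun h => hn v h hv).le
  · simp [ht, hv, (half_pos hε).le]

lemma dense_span_single (hX : IsC0SpaceRep ι μ) :
    Dense (Submodule.span 𝕜 (Set.range hX.single) : Set X) := by
  refine fun x => Metric.mem_closure_iff.2 fun ε hε => ?_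
  have large_finite := tendsto_cofinite_zero_iff.1 (hX.tendsto_coeff_mul x) (ε / 2) (half_pos hε)
  refine ⟨∑ v ∈ large_finite.toFinset, ι x v • hX.single v, Submodule.sum_mem _ fun v _ =>
    Submodule.smul_mem _ _ (Submodule.subset_span ⟨v, rfl⟩), ?_⟩
  rw [dist_eq_norm]
  refine (hX.norm_le (half_pos hε).le fun v => ?_).trans_lt (half_lt_self hε)
  have coeff_sum : ι (∑ v ∈ large_finite.toFinset, ι x v • hX.single v) v =
      if ε / 2 ≤ ‖ι x v * μ v‖ then ι x v else 0 := by
    simp [hX.coeff_single, Pi.single_apply]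
  rw [map_sub, Pi.sub_apply, coeff_sum]
  split_ifs with h
  · simp [(half_pos hε).le]
  · simpa using (not_le.1 h).le

lemma secondCountableTopology [Countable V] (hX : IsC0SpaceRep ι μ) :
    SecondCountableTopology X := by
  have : TopologicalSpace.IsSeparable (Set.univ : Set X) :=
    hX.dense_span_single.closure_eq ▸ (Set.countable_range hX.single).isSeparable.span.closure
  have := TopologicalSpace.isSeparable_univ_iff.1 this
  exact UniformSpace.secondCountable_of_separable X

lemma exists_coeff_ne_zero_of_dense (hX : IsC0SpaceRep ι μ) {s : Set X} (hs : Dense s) {v : V}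
    (hv : μ v ≠ 0) : ∃ x ∈ s, ι x v ≠ 0 := by
  by_contra! h
  have : (fun x => ι x v) = fun _ => 0 :=
    (hX.continuous_coeff hv).ext_on hs continuous_const h
  simpa [hX.coeff_single] using congrFun this (hX.single v)

end IsC0SpaceRep

end C0SpaceRep

section Shift

variable {𝕜 : Type*} [RCLike 𝕜] {X : Type*} [NormedAddCommGroup X] [NormedSpace 𝕜 X]
  {ι : X →ₗ[𝕜] V → 𝕜} {μ : V → 𝕜} {T : X →L[𝕜] X} {par : V → Option V} {dep : V → ℕ} {p u v : V}

namespace IsShiftRep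

lemma hasSum_coeff (hT : IsShiftRep par (fun _ => (1 : 𝕜)) ι T) (x : X) (v : V) :
    HasSum (fun u : ↥(children par v) => ι x u) (ι (T x) v) := by
  simpa only [one_mul] using hT x v

lemma apply_single (hT : IsShiftRep par (fun _ => (1 : 𝕜)) ι T) (hX : IsC0SpaceRep ι μ) (u : V) :
    T (hX.single u) = (par u).elim 0 hX.single := by
  refine hX.1 (funext fun v => (hT.hasSum_coeff _ v).unique ?_)
  rw [hX.coeff_single]
  by_cases hu : par u = some v
  · convert hasSum_single (⟨u, hu⟩ : ↥(children par v)) fun w hw => ?_ using 1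
    · simp [hu, hX.coeff_single]
    · exact Pi.single_eq_of_ne (fun h => hw (Subtype.ext h)) _
  · have coeff_zero : ι ((par u).elim 0 hX.single) v = 0 := by
      rcases hp : par u with _ | p
      · simp
      · have hpv : v ≠ p := fun h => hu (h ▸ hp)
        simp [hX.coeff_single, hpv]
    rw [coeff_zero]
    convert hasSum_zero with w
    exact Pi.single_eq_of_ne (fun h : w.1 = u => hu (h ▸ w.2)) _

lemma pow_apply_single (hT : IsShiftRep par (fun _ => (1 : 𝕜)) ι T) (hX : IsC0SpaceRep ι μ)
    (n : ℕ) (u : V) : (T ^ n) (hX.single u) = (parIter par n u).elim 0 hX.single := by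
  induction n generalizing u with
  | zero => simp [parIter]
  | succ n ih =>
    rw [pow_succ, mul_apply_eq_comp, hT.apply_single hX]
    rcases hp : par u with _ | p
    · simp [parIter, hp]
    · simp [parIter, hp, ih]

/-- Test `T` on the vector with coefficient `‖μ u‖⁻¹` at each `u ∈ F`, whose norm is at most one. -/
lemma sum_inv_norm_mul_le (hT : IsShiftRep par (fun _ => (1 : 𝕜)) ι T) (hX : IsC0SpaceRep ι μ)
    {F : Finset V} (hF : ∀ u ∈ F, par u = some p) : (∑ u ∈ F, ‖μ u‖⁻¹) * ‖μ p‖ ≤ ‖T‖ := by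
  set x : X := ∑ u ∈ F, ((‖μ u‖⁻¹ : ℝ) : 𝕜) • hX.single u
  have coeff_x (v : V) : ι x v = if v ∈ F then ((‖μ v‖⁻¹ : ℝ) : 𝕜) else 0 := by
    simp [x, hX.coeff_single, Pi.single_apply]
  have norm_x : ‖x‖ ≤ 1 := by
    refine hX.norm_le zero_le_one fun v => ?_
    rw [coeff_x]
    split_ifs
    · simpa using inv_mul_le_one
    · simp
  have shift_x : T x = ((∑ u ∈ F, ‖μ u‖⁻¹ : ℝ) : 𝕜) • hX.single p := by
    simp only [x, map_sum, map_smul, Finset.sum_smul]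
    refine Finset.sum_congr rfl fun u hu => ?_
    rw [hT.apply_single hX, hF u hu, Option.elim_some]
  calc (∑ u ∈ F, ‖μ u‖⁻¹) * ‖μ p‖ = ‖ι (T x) p * μ p‖ := by
        rw [shift_x, map_smul, Pi.smul_apply, hX.coeff_single, Pi.single_eq_same, smul_eq_mul,
          mul_one, norm_mul, RCLike.norm_ofReal,
          abs_of_nonneg (Finset.sum_nonneg fun u _ => inv_nonneg.2 (norm_nonneg _))]
    _ ≤ ‖T x‖ := hX.norm_coeff_mul_le _ _
    _ ≤ ‖T‖ := T.unit_le_opNorm x norm_x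

lemma tsum_inv_enorm_ne_top (hT : IsShiftRep par (fun _ => (1 : 𝕜)) ι T)
    (hX : IsC0SpaceRep ι μ) (hμ : ∀ u, μ u ≠ 0) (p : V) :
    ∑' u : ↥(children par p), ‖μ u‖ₑ⁻¹ ≠ ⊤ := by
  refine ne_top_of_le_ne_top (ENNReal.ofReal_ne_top (r := ‖T‖ / ‖μ p‖)) ?_
  rw [ENNReal.tsum_eq_iSup_sum]
  refine iSup_le fun F => ?_
  have sum_le := hT.sum_inv_norm_mul_le hX (F := F.map (.subtype (· ∈ children par p)))
    fun u hu => Finset.property_of_mem_map_subtype F hu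
  rw [← le_div_iff₀ (norm_pos_iff.2 (hμ p)), Finset.sum_map] at sum_le
  refine le_trans (le_of_eq ?_) (ENNReal.ofReal_le_ofReal sum_le)
  rw [ENNReal.ofReal_sum_of_nonneg fun u _ => inv_nonneg.2 (norm_nonneg _)]
  refine Finset.sum_congr rfl fun u _ => ?_
  rw [ENNReal.ofReal_inv_of_pos (norm_pos_iff.2 (hμ _)), ofReal_norm]
  rfl

end IsShiftRep

end Shift

section PeriodicToFlow

lemma IsPeriodicPoint.exists_backward_orbit {𝕜 : Type*} [RCLike 𝕜] {X : Type*} [AddCommGroup X]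
    [Module 𝕜 X] [TopologicalSpace X] {T : X →L[𝕜] X} {x : X} (hx : IsPeriodicPoint T x) :
    ∃ z : ℕ → X, z 0 = x ∧ (∀ k, T (z (k + 1)) = z k) ∧ (Set.range z).Finite := by
  obtain ⟨N, hN, hNx⟩ := hx
  rw [FunLike.coe_pow_eq_iterate] at hNx
  refine ⟨fun k => T^[(N - 1) * k] x, rfl, fun k => ?_, ?_⟩
  · have exponent : (N - 1) * (k + 1) + 1 = (N - 1) * k + N := by
      rw [mul_add_one, add_assoc, Nat.sub_add_cancel hN]
    calc T (T^[(N - 1) * (k + 1)] x) = T^[(N - 1) * k + N] x := by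
          rw [← Function.iterate_succ_apply' T, Nat.succ_eq_add_one, exponent]
      _ = T^[(N - 1) * k] x := by rw [Function.iterate_add_apply, hNx]
  · refine ((Finset.range N).image fun j => T^[j] x).finite_toSet.subset ?_
    rintro _ ⟨k, rfl⟩
    rw [Finset.mem_coe, Finset.mem_image]
    exact ⟨_, Finset.mem_range.2 (Nat.mod_lt _ hN), Function.IsPeriodicPt.iterate_mod_apply hNx _⟩

variable {𝕜 : Type*} [RCLike 𝕜] {X : Type*} [NormedAddCommGroup X] [NormedSpace 𝕜 X]
  {ι : X →ₗ[𝕜] V → 𝕜} {μ : V → 𝕜} {T : X →L[𝕜] X} {par : V → Option V} {dep : V → ℕ} {v : V}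

lemma IsDepth.isUnitFlow_of_backward_orbit (hdep : IsDepth par dep)
    (hT : IsShiftRep par (fun _ => (1 : 𝕜)) ι T) {z : ℕ → X} (hz : ∀ k, T (z (k + 1)) = z k)
    (hv : ι (z 0) v ≠ 0) :
    IsUnitFlow par v
      ((descendants par v).indicator fun u => ι (z (dep u - dep v)) u / ι (z 0) v) where
  self := by simp [mem_descendants_self, hv]
  eq_zero u hu := Set.indicator_of_notMem hu _
  hasSum u hu := by
    have depth_child (w : ↥(children par u)) : dep w - dep v = dep u - dep v + 1 := by
      obtain ⟨n, hn⟩ := id hu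
      rw [hdep w u w.2, hdep.eq_add hn]
      omega
    have sum_children := (hT.hasSum_coeff (z (dep u - dep v + 1)) u).div_const (ι (z 0) v)
    rw [hz] at sum_children
    rw [Set.indicator_of_mem hu]
    convert sum_children using 2 with w
    rw [Set.indicator_of_mem (mem_descendants_of_mem_children hu w.2), depth_child w]

lemma IsDepth.hasC0Flow_of_dense_periodic (hdep : IsDepth par dep) (hX : IsC0SpaceRep ι μ)
    (hT : IsShiftRep par (fun _ => (1 : 𝕜)) ι T) (hdense : Dense {x | IsPeriodicPoint T x})
    (hv : μ v ≠ 0) : HasC0Flow par μ v := by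
  obtain ⟨x, hx, hxv⟩ := hX.exists_coeff_ne_zero_of_dense hdense hv
  obtain ⟨z, rfl, hz, hz_finite⟩ := hx.exists_backward_orbit
  refine ⟨_, hdep.isUnitFlow_of_backward_orbit hT hz hxv, ?_⟩
  have sum_tendsto : Tendsto (fun u => (∑ y ∈ hz_finite.toFinset, ‖ι y u * μ u‖) / ‖ι (z 0) v‖)
      cofinite (𝓝 0) := by
    simpa using (tendsto_finsetSum _ fun y _ => (hX.tendsto_coeff_mul y).norm).div_const _
  refine squeeze_zero_norm (fun u => ?_) sum_tendsto
  by_cases hu : u ∈ descendants par v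
  · rw [Set.indicator_of_mem hu, div_mul_eq_mul_div, norm_div]
    gcongr
    exact Finset.single_le_sum (f := fun y => ‖ι y u * μ u‖) (fun _ _ => norm_nonneg _)
      (hz_finite.mem_toFinset.2 ⟨_, rfl⟩)
  · rw [Set.indicator_of_notMem hu, zero_mul, norm_zero]
    positivity

end PeriodicToFlow

section FlowToChaos

variable {𝕜 : Type*} [RCLike 𝕜] {X : Type*} [NormedAddCommGroup X] [NormedSpace 𝕜 X]
  {ι : X →ₗ[𝕜] V → 𝕜} {μ : V → 𝕜} {T : X →L[𝕜] X} {par : V → Option V} {dep : V → ℕ} {v : V}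
  {f : V → 𝕜} {A : Set ℕ} {x : X}

lemma IsDepth.coeff_apply_of_indicator (hdep : IsDepth par dep)
    (hT : IsShiftRep par (fun _ => (1 : 𝕜)) ι T) (hf : IsUnitFlow par v f)
    (hx : ι x = (dep ⁻¹' A).indicator f) (hv : dep v ∉ A) :
    ι (T x) = (dep ⁻¹' {d | d + 1 ∈ A}).indicator f := by
  refine funext fun u => (hT.hasSum_coeff x u).unique ?_
  have mem_iff (w : ↥(children par u)) : ↑w ∈ dep ⁻¹' A ↔ dep u + 1 ∈ A := by
    rw [Set.mem_preimage, hdep w u w.2]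
  rw [hx]
  by_cases huA : dep u + 1 ∈ A
  · simp only [Set.indicator_of_mem ((mem_iff _).2 huA)]
    rw [Set.indicator_of_mem (show u ∈ dep ⁻¹' {d | d + 1 ∈ A} from huA)]
    by_cases hu : u ∈ descendants par v
    · exact hf.hasSum u hu
    · have child_notMem (w : ↥(children par u)) : ↑w ∉ descendants par v := fun hw =>
        hu (mem_descendants_of_child_mem hw w.2 fun h => hv (h ▸ (mem_iff w).2 huA))
      simpa only [hf.eq_zero _ (child_notMem _), hf.eq_zero u hu] using hasSum_zero
  · simp only [Set.indicator_of_notMem fun h => huA ((mem_iff _).1 h)]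
    rw [Set.indicator_of_notMem (show u ∉ dep ⁻¹' {d | d + 1 ∈ A} from huA)]
    exact hasSum_zero

lemma IsDepth.coeff_pow_apply_of_indicator (hdep : IsDepth par dep)
    (hT : IsShiftRep par (fun _ => (1 : 𝕜)) ι T) (hf : IsUnitFlow par v f)
    (hx : ι x = (dep ⁻¹' A).indicator f) {n : ℕ} (hv : ∀ i < n, dep v + i ∉ A) :
    ι ((T ^ n) x) = (dep ⁻¹' {d | d + n ∈ A}).indicator f := by
  induction n with
  | zero => simpa using hx
  | succ n ih =>
    rw [pow_succ', mul_apply_eq_comp]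
    have step := hdep.coeff_apply_of_indicator hT hf
      (ih fun i hi => hv i (hi.trans n.lt_succ_self)) (hv n n.lt_succ_self)
    simpa only [Set.mem_ofPred_eq, add_right_comm _ 1 n, add_assoc _ n 1] using step

lemma IsDepth.indicator_depth_eq_single_add (hdep : IsDepth par dep) (hf : IsUnitFlow par v f)
    {N : ℕ} (hN : 0 < N) :
    (dep ⁻¹' {d | ∃ k, d + N = dep v + (k + 1) * N}).indicator f =
      Pi.single v 1 + (dep ⁻¹' {d | ∃ k, d = dep v + (k + 1) * N}).indicator f := by
  funext u
  rw [Pi.add_apply]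
  rcases eq_or_ne u v with rfl | huv
  · have self_notMem : u ∉ dep ⁻¹' {d | ∃ k, d = dep u + (k + 1) * N} := by
      rintro ⟨k, hk⟩
      have : 0 < (k + 1) * N := by positivity
      omega
    rw [Set.indicator_of_mem (show u ∈ dep ⁻¹' {d | ∃ k, d + N = _} from ⟨0, by simp⟩),
      Set.indicator_of_notMem self_notMem, hf.self, Pi.single_eq_same, add_zero]
  rw [Pi.single_eq_of_ne huv, zero_add]
  by_cases hu : u ∈ descendants par v
  · have depth_ne : dep u ≠ dep v := fun h => huv (hdep.eq_of_mem_descendants hu h)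
    have mem_iff : (∃ k, dep u + N = dep v + (k + 1) * N) ↔
        ∃ k, dep u = dep v + (k + 1) * N := by
      constructor
      · rintro ⟨_ | k, hk⟩
        · exact absurd (by simpa using hk) depth_ne
        · exact ⟨k, by linarith⟩
      · rintro ⟨k, hk⟩
        exact ⟨k + 1, by linarith⟩
    simp only [Set.indicator_apply, Set.mem_preimage, Set.mem_ofPred_eq, mem_iff]
  · simp only [Set.indicator_apply, hf.eq_zero u hu, ite_self]

/-- The restriction of the flow to the depths `dep v + N, dep v + 2 * N, …` is the perturbation
that makes the vector of `v` periodic of period `N`. -/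
lemma IsDepth.single_mem_periodicallyPerturbable (hdep : IsDepth par dep) (hX : IsC0SpaceRep ι μ)
    (hT : IsShiftRep par (fun _ => (1 : 𝕜)) ι T) (hflow : HasC0Flow par μ v) :
    hX.single v ∈ periodicallyPerturbable T := by
  obtain ⟨f, hf, hf_tendsto⟩ := hflow
  let A (N : ℕ) : Set ℕ := {d | ∃ k, d = dep v + (k + 1) * N}
  have add_le_of_mem {N d : ℕ} (hd : d ∈ A N) : dep v + N ≤ d := by
    obtain ⟨k, rfl⟩ := hd
    nlinarith
  choose t ht using fun N => hX.exists_eq_indicator hf_tendsto (dep ⁻¹' A N)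
  have t_tendsto : Tendsto t atTop (𝓝 0) := by
    refine hX.tendsto_zero_of_indicator hf_tendsto (fun u => ?_) ht
    filter_upwards [eventually_gt_atTop (dep u)] with N hN hu
    have := add_le_of_mem hu
    omega
  refine ⟨t, t_tendsto, ?_⟩
  filter_upwards [eventually_gt_atTop (dep v)] with N hN
  refine ⟨by rw [hT.pow_apply_single hX, hdep.parIter_eq_none hN, Option.elim_none], hX.1 ?_⟩
  have notMem_of_lt : ∀ i < N, dep v + i ∉ A N := fun i hi h => by
    have := add_le_of_mem h
    omega
  rw [hdep.coeff_pow_apply_of_indicator hT hf (ht N) notMem_of_lt, map_add, ht, hX.coeff_single]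
  exact hdep.indicator_depth_eq_single_add hf (Nat.zero_lt_of_lt hN)

lemma IsDepth.chaoticOp_of_forall_hasC0Flow [Countable V] [CompleteSpace X]
    (hdep : IsDepth par dep) (hX : IsC0SpaceRep ι μ)
    (hT : IsShiftRep par (fun _ => (1 : 𝕜)) ι T) (hflow : ∀ v, HasC0Flow par μ v) :
    ChaoticOp T := by
  have := hX.secondCountableTopology
  refine chaoticOp_of_dense_periodicallyPerturbable (hX.dense_span_single.mono ?_)
  refine Submodule.span_le.2 ?_
  rintro _ ⟨v, rfl⟩
  exact hdep.single_mem_periodicallyPerturbable hX hT (hflow v)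

end FlowToChaos

section WeightCharacterization

variable {𝕜 : Type*} [RCLike 𝕜] {par : V → Option V} {dep : V → ℕ} {μ : V → 𝕜}

lemma IsDepth.forall_hasC0Flow_iff_exists_weight [Countable V] (hdep : IsDepth par dep)
    (hLeafless : Leafless par) (hμ : ∀ u, μ u ≠ 0)
    (hsum : ∀ p, ∑' u : ↥(children par p), ‖μ u‖ₑ⁻¹ ≠ ⊤) :
    (∀ v, HasC0Flow par μ v) ↔ ∃ μt : V → 𝕜, (∀ v, μt v ≠ 0) ∧
      (∀ ε : ℝ, 0 < ε → {v | ε ≤ ‖μ v‖ / ‖μt v‖}.Finite) ∧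
      ∀ v, cInfC (children par) (nw μt) v < ⊤ := by
  simp only [← norm_div, ← tendsto_cofinite_zero_iff]
  refine ⟨exists_weight_of_hasC0Flow hμ, fun ⟨μt, hμt, hdiv, hfin⟩ v => ?_⟩
  exact hdep.hasC0Flow_of_cInfC_lt_top hLeafless hμ hsum (fun u _ => hμt u)
    (tendsto_indicator_cofinite_zero hdiv _) (hfin v)

lemma IsDepth.hasC0Flow_iff_exists_weight_on [Countable V] (hdep : IsDepth par dep)
    (hLeafless : Leafless par) (hμ : ∀ u, μ u ≠ 0)
    (hsum : ∀ p, ∑' u : ↥(children par p), ‖μ u‖ₑ⁻¹ ≠ ⊤) (v : V) :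
    HasC0Flow par μ v ↔ ∃ μt : V → 𝕜, (∀ u ∈ descendants par v, μt u ≠ 0) ∧
      (∀ ε : ℝ, 0 < ε → {u ∈ descendants par v | ε ≤ ‖μ u‖ / ‖μt u‖}.Finite) ∧
      cInfC (children par) (nw μt) v < ⊤ := by
  simp only [← norm_div, ← tendsto_indicator_cofinite_zero_iff]
  constructor
  · intro hflow
    obtain ⟨μt, hμt, hdiv, hfin⟩ :=
      exists_weight_of_hasC0Flow hμ (v := fun _ : Unit => v) fun _ => hflow
    exact ⟨μt, fun u _ => hμt u, tendsto_indicator_cofinite_zero hdiv _, hfin ()⟩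
  · rintro ⟨μt, hμt, hdiv, hfin⟩
    exact hdep.hasC0Flow_of_cInfC_lt_top hLeafless hμ hsum hμt hdiv hfin

end WeightCharacterization

theorem statement12_general {𝕜 : Type*} [RCLike 𝕜] {V : Type*} [Countable V] {par : V → Option V}
    {dep : V → ℕ} (hdep : IsDepth par dep) (hLeafless : Leafless par)
    {μ : V → 𝕜} (hμ : ∀ v : V, μ v ≠ 0)
    {X : Type*} [NormedAddCommGroup X] [NormedSpace 𝕜 X] [CompleteSpace X]
    {ι : X →ₗ[𝕜] V → 𝕜} (hX : IsC0SpaceRep ι μ)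
    {T : X →L[𝕜] X} (hT : IsShiftRep par (fun _ : V => (1 : 𝕜)) ι T) :
    (ChaoticOp T ↔
      ∃ μt : V → 𝕜, (∀ v : V, μt v ≠ 0) ∧
        (∀ ε : ℝ, 0 < ε → {v : V | ε ≤ ‖μ v‖ / ‖μt v‖}.Finite) ∧
        ∀ v : V, cInfC (children par) (nw μt) v < ⊤) ∧
    ((∃ μt : V → 𝕜, (∀ v : V, μt v ≠ 0) ∧
        (∀ ε : ℝ, 0 < ε → {v : V | ε ≤ ‖μ v‖ / ‖μt v‖}.Finite) ∧
        ∀ v : V, cInfC (children par) (nw μt) v < ⊤) ↔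
      ∀ v : V, ∃ μt : V → 𝕜, (∀ u ∈ descendants par v, μt u ≠ 0) ∧
        (∀ ε : ℝ, 0 < ε → {u ∈ descendants par v | ε ≤ ‖μ u‖ / ‖μt u‖}.Finite) ∧
        cInfC (children par) (nw μt) v < ⊤) := by
  have hsum := hT.tsum_inv_enorm_ne_top hX hμ
  have chaotic_iff : ChaoticOp T ↔ ∀ v, HasC0Flow par μ v :=
    ⟨fun hchaos v => hdep.hasC0Flow_of_dense_periodic hX hT hchaos.2 (hμ v),
      hdep.chaoticOp_of_forall_hasC0Flow hX hT⟩
  have global_iff := hdep.forall_hasC0Flow_iff_exists_weight hLeafless hμ hsum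
  have local_iff (v : V) := hdep.hasC0Flow_iff_exists_weight_on hLeafless hμ hsum v
  exact ⟨chaotic_iff.trans global_iff, global_iff.symm.trans (forall_congr' local_iff)⟩

/-- Theorem 7.4 / `t-char0mu`: on a leafless rooted tree, the unweighted
backward shift, as an operator on `c₀(V,μ)`, is chaotic iff there is a comparable weight
`μ̃` (with `μ/μ̃ ∈ c₀`) whose constants `c_∞(V(v), μ̃)` are all finite; equivalently such a
weight exists locally on each subtree `V(v)`. -/
theorem statement12
    {𝕜 : Type*} [RCLike 𝕜] {V : Type*} (par : V → Option V) (hTree : IsDirectedTree par)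
    (hLeafless : Leafless par) (root : V) (hroot : IsRoot par root)
    (μ : V → 𝕜) (hμ : ∀ v : V, μ v ≠ 0)
    {X : Type*} [NormedAddCommGroup X] [NormedSpace 𝕜 X] [CompleteSpace X]
    (ι : X →ₗ[𝕜] V → 𝕜) (hX : IsC0SpaceRep ι μ)
    (T : X →L[𝕜] X) (hT : IsShiftRep par (fun _ : V => (1 : 𝕜)) ι T) :
    -- (i) ⇔ (ii)
    (ChaoticOp T ↔
      ∃ μt : V → 𝕜, (∀ v : V, μt v ≠ 0) ∧
        (∀ ε : ℝ, 0 < ε → {v : V | ε ≤ ‖μ v‖ / ‖μt v‖}.Finite) ∧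
        ∀ v : V, cInfC (children par) (nw μt) v < ⊤) ∧
    -- (ii) ⇔ (iii)
    ((∃ μt : V → 𝕜, (∀ v : V, μt v ≠ 0) ∧
        (∀ ε : ℝ, 0 < ε → {v : V | ε ≤ ‖μ v‖ / ‖μt v‖}.Finite) ∧
        ∀ v : V, cInfC (children par) (nw μt) v < ⊤) ↔
      ∀ v : V, ∃ μt : V → 𝕜, (∀ u ∈ descendants par v, μt u ≠ 0) ∧
        (∀ ε : ℝ, 0 < ε → {u ∈ descendants par v | ε ≤ ‖μ u‖ / ‖μt u‖}.Finite) ∧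
        cInfC (children par) (nw μt) v < ⊤) := by
  have := hTree.countable
  obtain ⟨dep, hdep⟩ := hTree.exists_isDepth hroot
  exact statement12_general hdep hLeafless hμ hX hT

end PaperTree
end

section
/- Let V be a leafless unrooted directed tree and μ=(μ_v)_{v∈V} a weight of nonzero scalars. Let 1<p<∞ and suppose the unweighted backward shift B is an operator on ℓ^p(V,μ). Then B is chaotic on ℓ^p(V,μ) if and only if for every v∈V: c_p(V(v),μ)<∞, and for every ε>0 there is some N≥1 such that c_p(V_-^N(v),μ)<ε. -/
open scoped ENNReal NNReal Topology Classical
open Filter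

namespace PaperTree

/-! ### Directed trees -/

variable {V : Type*}

/-! ### The rooted trees `V_-^N(v)` associated with a vertex of an unrooted tree -/

section Minus

variable {V : Type*}

/-- The generation of index `n ∈ ℤ` relative to the vertex `v` (which lies in generation `0`). -/
def relGen (par : V → Option V) (v : V) (n : ℤ) : Set V :=
  {w : V | ∃ j k : ℕ, (j : ℤ) - (k : ℤ) = n ∧
      ∃ a : V, parIter par k v = some a ∧ parIter par j w = some a}

/-- The spine through `v`: the vertices `par^{nN}(v)`, `n ≥ 0`. -/
def spine (par : V → Option V) (v : V) (N : ℕ) (w : V) : Prop :=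
  ∃ n : ℕ, parIter par (n * N) v = some w

/-- The modified children map of the rooted tree `V_-^N(v)` (with root `v`). -/
def childrenMinus (par : V → Option V) (v : V) (N : ℕ) (w : V) : Set V :=
  {u : V |
    (¬ spine par v N w ∧ parIter par N u = some w) ∨
    ∃ n : ℕ, parIter par (n * N) v = some w ∧
      (parIter par ((n + 1) * N) v = some u ∨
        ∃ a : V, parIter par ((n + 1) * N) v = some a ∧ parIter par N u = some a ∧ u ≠ w)}

/-- The vertex set of the rooted tree `V_-^N(v)`: all vertices in generations that are
multiples of `N` (relative to `v`), minus the proper descendants of `v` of such degrees. -/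
def VminusN (par : V → Option V) (v : V) (N : ℕ) : Set V :=
  {w : V | (∃ n : ℤ, w ∈ relGen par v (n * (N : ℤ))) ∧
    ∀ n : ℕ, 1 ≤ n → parIter par (n * N) w ≠ some v}

end Minus

/-!
By Hölder's inequality, `c_p` of a rooted tree is the least `ℓ^p(μ)`-norm, off the root, of a flow
of strength `1` issuing from the root: `c_p · |f(v)| ≤ ‖f - f(v) e_v‖` whenever `|f|` is at every
vertex at most the sum of its values at the children, with equality for the unit flow that splits at
every vertex according to the parallel resistances of the branches.

Suppose `T ^ N x = x`. Then `sup_j |T ^ j x|` is at every vertex at most the sum of its values at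
the children, so `c_p(V(v))` is finite as soon as `x v ≠ 0`. Moreover `x v` is the sum of `x` over
`Chi^N(v)`, which says that `x`, after a change of sign off the spine `par^{nN}(v)`, is a flow on
`V_-^N(v)`; when `x` is close to `e_v`, this makes `c_p(V_-^N(v))` small.

Conversely, the unit flow on `V(v)` gives a vector `g` with `T g = g + e_{par v}`, and the unit flow
on `V_-^N(v)`, after the change of sign, a small perturbation `x` of `e_v` with `T ^ N x = x - e_v`.
Restricting both to the generations divisible by a multiple `n` of `N` produces small solutions `Q`
and `S` of `T ^ n Q = e_v + Q` and `T ^ n (e_v + S) = S`. So `e_v` can be sent to a small vector and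
recovered from one, always up to a perturbation fixed by the transition, and linear combinations
yield both transitivity and dense periodic points.
-/

/-! ### Sums in `[0, ∞]` -/

section ENNRealSums

variable {α β : Type*} {p q : ℝ}

lemma holderConjugate_conjExp (hp : 1 < p) : p.HolderConjugate (conjExp p) :=
  Real.HolderConjugate.conjExponent hp

lemma tsum_mul_le_Lp_mul_Lq (h : p.HolderConjugate q) (f g : α → ℝ≥0∞) :
    ∑' i, f i * g i ≤ (∑' i, f i ^ p) ^ (1 / p) * (∑' i, g i ^ q) ^ (1 / q) := by
  have hp := h.pos
  have hq := h.symm.pos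
  rw [ENNReal.tsum_eq_iSup_sum]
  refine iSup_le fun s => (ENNReal.inner_le_Lp_mul_Lq s f g h).trans ?_
  gcongr <;> exact ENNReal.sum_le_tsum s

lemma tsum_iInf_eq (f : ℕ → α → ℝ≥0∞) (hf : Antitone f) (hf₀ : ∑' a, f 0 a ≠ ⊤) :
    ∑' a, ⨅ n, f n a = ⨅ n, ∑' a, f n a := by
  let _ : MeasurableSpace α := ⊤
  have h := MeasureTheory.lintegral_iInf (μ := MeasureTheory.Measure.count) (f := f)
    (fun _ => measurable_from_top) hf (by rwa [MeasureTheory.lintegral_count])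
  simpa only [MeasureTheory.lintegral_count] using h

lemma tendsto_tsum_zero_of_eventually_eq_zero {l : Filter β} {f : β → α → ℝ≥0∞} {a : α → ℝ≥0∞}
    (ha : ∑' u, a u ≠ ⊤) (hfa : ∀ n u, f n u ≤ a u) (hf : ∀ u, ∀ᶠ n in l, f n u = 0) :
    Tendsto (fun n => ∑' u, f n u) l (𝓝 0) := by
  rw [ENNReal.tendsto_nhds_zero]
  intro ε hε
  obtain ⟨s, hs⟩ := ((ENNReal.tendsto_nhds_zero.1
    (ENNReal.tendsto_tsum_compl_atTop_zero ha)) ε hε).exists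
  filter_upwards [(s.eventually_all).2 fun u _ => hf u] with n hn
  refine le_trans ?_ hs
  rw [← tsum_subtype_eq_of_support_subset (s := {u | u ∉ s})
    fun u hu hus => hu (hn u hus)]
  exact ENNReal.tsum_le_tsum fun u => hfa n u

lemma tsum_eq_tsum_children {V : Type*} (q : V → Option V) {F : V → ℝ≥0∞}
    (hF : ∀ u, q u = none → F u = 0) : ∑' u, F u = ∑' x, ∑' u : ↥(children q x), F u := by
  simp only [tsum_subtype (children q _) F]
  rw [ENNReal.tsum_comm]
  refine tsum_congr fun u => ?_
  cases hu : q u with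
  | none => simp [hF u hu, Set.indicator]
  | some x =>
    rw [tsum_eq_single x fun y hy => Set.indicator_of_notMem
      (by simpa [children, hu] using hy.symm) F]
    simp [children, hu]

end ENNRealSums

/-! ### The parallel law -/

section ParallelLaw

variable {α : Type*} {p q : ℝ} {r : α → ℝ≥0∞}

/-- The resistance of resistors `r i` wired in parallel, in the nonlinear network whose energy is
the `p`-th power sum of the potential drops, `q` being the exponent conjugate to `p`. -/
noncomputable def parallelResistance (q : ℝ) (r : α → ℝ≥0∞) : ℝ≥0∞ :=
  (∑' i, r i ^ (-q)) ^ (-(1 / q))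

/-- The part of a unit flow through the parallel resistors `r` that runs through the resistor `i`
when the energy is minimal. -/
noncomputable def share (q : ℝ) (r : α → ℝ≥0∞) (i : α) : ℝ≥0∞ :=
  r i ^ (-q) * (∑' j, r j ^ (-q))⁻¹

lemma parallelResistance_mono (hq : 0 < q) {r' : α → ℝ≥0∞} (h : r ≤ r') :
    parallelResistance q r ≤ parallelResistance q r' := by
  simp only [parallelResistance, ENNReal.rpow_neg]
  gcongr with i
  exact h i

lemma parallelResistance_mul_tsum_le (h : p.HolderConjugate q) (f : α → ℝ≥0∞) :
    parallelResistance q r * ∑' i, f i ≤ (∑' i, (f i * r i) ^ p) ^ (1 / p) := by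
  have hp := h.pos
  have hq := h.symm.pos
  set R := (∑' i, r i ^ (-q)) ^ (1 / q) with hR
  have hpar : parallelResistance q r = R⁻¹ := by rw [parallelResistance, ENNReal.rpow_neg]
  rcases eq_or_ne R ⊤ with hRtop | hRtop
  · simp [hpar, hRtop]
  by_cases hbad : ∃ i, r i = ⊤ ∧ f i ≠ 0
  · obtain ⟨i, hri, hfi⟩ := hbad
    have htop : ∑' i, (f i * r i) ^ p = ⊤ :=
      ENNReal.tsum_eq_top_of_eq_top ⟨i, by simp [hri, hfi, hp]⟩
    simp [htop, hp]
  have hr₀ : ∀ i, r i ≠ 0 := fun i hi => hRtop <| by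
    rw [hR, ENNReal.tsum_eq_top_of_eq_top ⟨i, by simp [hi, hq]⟩]
    simp [hq]
  have hcancel : ∀ i, f i = f i * r i * (r i)⁻¹ := fun i => by
    rcases eq_or_ne (f i) 0 with hf | hf
    · simp [hf]
    · rw [mul_assoc, ENNReal.mul_inv_cancel (hr₀ i) fun hri => hbad ⟨i, hri, hf⟩, mul_one]
  have hHolder : ∑' i, f i ≤ (∑' i, (f i * r i) ^ p) ^ (1 / p) * R := by
    rw [tsum_congr hcancel, hR]
    simpa only [ENNReal.inv_rpow, ← ENNReal.rpow_neg] using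
      tsum_mul_le_Lp_mul_Lq h (fun i => f i * r i) fun i => (r i)⁻¹
  rw [hpar, mul_comm, ← div_eq_mul_inv]
  exact ENNReal.div_le_of_le_mul hHolder

lemma tsum_share (h₀ : ∑' i, r i ^ (-q) ≠ 0) (htop : ∑' i, r i ^ (-q) ≠ ⊤) :
    ∑' i, share q r i = 1 := by
  simp only [share, ENNReal.tsum_mul_right]
  exact ENNReal.mul_inv_cancel h₀ htop

lemma tsum_share_mul_rpow (h : p.HolderConjugate q) (h₀ : ∑' i, r i ^ (-q) ≠ 0)
    (htop : ∑' i, r i ^ (-q) ≠ ⊤) :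
    ∑' i, (share q r i * r i) ^ p = parallelResistance q r ^ p := by
  have hp := h.pos
  have hq := h.symm.pos
  set Z := ∑' i, r i ^ (-q) with hZ
  have hpq : -q * p + p = -q := by linarith [h.mul_eq_add]
  have hterm : ∀ i, (share q r i * r i) ^ p = r i ^ (-q) * Z⁻¹ ^ p := fun i => by
    have hi₀ : r i ≠ 0 := fun hi => htop <|
      ENNReal.tsum_eq_top_of_eq_top ⟨i, by simp [hi, hq]⟩
    rcases eq_or_ne (r i) ⊤ with hi | hi
    · simp [share, hi, hq, hp]
    rw [share, ← hZ, mul_right_comm, ENNReal.mul_rpow_of_nonneg _ _ hp.le,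
      ENNReal.mul_rpow_of_nonneg _ _ hp.le, ← ENNReal.rpow_mul, ← ENNReal.rpow_add _ _ hi₀ hi, hpq]
  have hexp : -(1 / q) * p = 1 + -p := by
    have := h.inv_add_inv_eq_one
    field_simp
    linarith [h.mul_eq_add]
  rw [tsum_congr hterm, ENNReal.tsum_mul_right, parallelResistance, ← hZ, ← ENNReal.rpow_mul, hexp,
    ENNReal.rpow_add _ _ h₀ htop, ENNReal.rpow_one, ENNReal.inv_rpow, ENNReal.rpow_neg]

end ParallelLaw

/-! ### Levels of a tree -/

section Levels

variable {V : Type*} {q : V → Option V} {v : V}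

/-- `Chi^n(x)`, the set of `n`-th generation descendants of `x`. -/
def childrenIter (q : V → Option V) (n : ℕ) (x : V) : Set V := {u | parIter q n u = some x}

/-- The vertex `v` lies on no cycle of the parent map `q`: the part of acyclicity that makes the
descendants of `v` a tree rooted at `v`. -/
def AcyclicAt (q : V → Option V) (v : V) : Prop := ∀ n : ℕ, 0 < n → parIter q n v ≠ some v

lemma acyclicAt_of_eq_none (hv : q v = none) : AcyclicAt q v := by
  intro n hn
  obtain ⟨n, rfl⟩ := Nat.exists_eq_succ_of_ne_zero hn.ne'
  simp [parIter, hv]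

lemma parIter_add (m n : ℕ) (u : V) :
    parIter q (m + n) u = (parIter q m u).bind (parIter q n) := by
  induction m generalizing u with
  | zero => simp [parIter]
  | succ m ih =>
    rw [Nat.succ_add, parIter, parIter, Option.bind_assoc]
    exact congrArg _ (funext ih)

lemma parIter_one : parIter q 1 = q := by
  funext u
  cases h : q u <;> simp [parIter, h]

lemma parIter_succ' (n : ℕ) (u : V) : parIter q (n + 1) u = (parIter q n u).bind q := by
  rw [parIter_add, parIter_one]

lemma AcyclicAt.parIter_inj (h : AcyclicAt q v) {u : V} {m n : ℕ}
    (hm : parIter q m u = some v) (hn : parIter q n u = some v) : m = n := by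
  wlog hmn : m ≤ n generalizing m n
  · exact (this hn hm (by omega)).symm
  obtain ⟨k, rfl⟩ := Nat.exists_eq_add_of_le hmn
  rw [parIter_add, hm, Option.bind_some] at hn
  by_contra hk
  exact h k (by omega) hn

lemma mem_childrenIter {n : ℕ} {u x : V} : u ∈ childrenIter q n x ↔ parIter q n u = some x :=
  Iff.rfl

lemma childrenIter_zero (x : V) : childrenIter q 0 x = {x} := by
  ext u
  simp [mem_childrenIter, parIter]

lemma childrenIter_succ (n : ℕ) (x : V) :
    childrenIter q (n + 1) x = ⋃ y ∈ children q x, childrenIter q n y := by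
  ext u
  simp [mem_childrenIter, parIter_succ', Option.bind_eq_some_iff, children, and_comm]

lemma tsum_childrenIter_succ (n : ℕ) (x : V) (F : V → ℝ≥0∞) :
    ∑' u : ↥(childrenIter q (n + 1) x), F u
      = ∑' y : ↥(children q x), ∑' u : ↥(childrenIter q n y), F u := by
  rw [childrenIter_succ]
  refine ENNReal.tsum_biUnion' fun y _ z _ hyz => Set.disjoint_left.2 fun u hy hz => hyz ?_
  exact Option.some_inj.1 ((mem_childrenIter.1 hy).symm.trans hz)

lemma AcyclicAt.tsum_tsum_childrenIter_le (h : AcyclicAt q v) (F : V → ℝ≥0∞) :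
    ∑' n, ∑' u : ↥(childrenIter q (n + 1) v), F u ≤ ∑' u : ↥({v}ᶜ : Set V), F u := by
  rw [← ENNReal.tsum_biUnion]
  · refine ENNReal.tsum_mono_subtype F (Set.iUnion_subset fun n u hu => ?_)
    rintro rfl
    exact h (n + 1) n.succ_pos hu
  · intro m _ n _ hmn
    exact Set.disjoint_left.2 fun u hm hn => hmn (by simpa using h.parIter_inj hm hn)

end Levels

/-! ### Continued fractions and superflows -/

section ContinuedFractions

lemma iSup_rpow {α : Sort*} {a : ℝ} (ha : 0 < a) (f : α → ℝ≥0∞) : (⨆ i, f i) ^ a = ⨆ i, f i ^ a :=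
  (ENNReal.orderIsoRpow a ha).map_iSup f

lemma iInf_rpow {α : Sort*} {a : ℝ} (ha : 0 < a) (f : α → ℝ≥0∞) : (⨅ i, f i) ^ a = ⨅ i, f i ^ a :=
  (ENNReal.orderIsoRpow a ha).map_iInf f

lemma parallelResistance_iSup {α : Type*} {q : ℝ} (hq : 0 < q) {r : ℕ → α → ℝ≥0∞}
    (hr : Monotone r) (h₀ : ∑' i, r 0 i ^ (-q) ≠ ⊤) :
    parallelResistance q (fun i => ⨆ n, r n i) = ⨆ n, parallelResistance q (r n) := by
  have hanti : Antitone fun n i => r n i ^ (-q) := fun m n hmn i => by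
    simp only [ENNReal.rpow_neg]
    gcongr
    exact hr hmn i
  have hterm : ∀ i, (⨆ n, r n i) ^ (-q) = ⨅ n, r n i ^ (-q) := fun i => by
    simp only [ENNReal.rpow_neg, iSup_rpow hq, ENNReal.inv_iSup]
  simp only [parallelResistance, hterm, tsum_iInf_eq _ hanti h₀, ENNReal.rpow_neg _ (1 / q),
    iInf_rpow (one_div_pos.2 hq), ENNReal.inv_iInf]

variable {V : Type*} {chi : V → Set V} {w : V → ℝ≥0∞} {p : ℝ}

/-- The resistance `r_p` truncated at depth `m`, i.e. `rpC` with `cpAux` in place of `cpC`. -/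
noncomputable def rpAux (chi : V → Set V) (w : V → ℝ≥0∞) (p : ℝ) (m : ℕ) (v : V) : ℝ≥0∞ :=
  (w v ^ p + cpAux chi w p m v ^ p) ^ (1 / p)

lemma rpAux_zero (hp : 1 < p) (v : V) : rpAux chi w p 0 v = w v := by
  have hp₀ : 0 < p := by linarith
  simp [rpAux, cpAux, hp₀, hp₀.ne', ENNReal.rpow_rpow_inv]

lemma rpAux_rpow (hp : 1 < p) (m : ℕ) (v : V) :
    rpAux chi w p m v ^ p = w v ^ p + cpAux chi w p m v ^ p := by
  rw [rpAux, one_div, ENNReal.rpow_inv_rpow (by linarith)]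

lemma rpC_rpow (hp : 1 < p) (v : V) : rpC chi w p v ^ p = w v ^ p + cpC chi w p v ^ p := by
  rw [rpC, one_div, ENNReal.rpow_inv_rpow (by linarith)]

lemma rpC_eq_top (hp : 1 < p) {v : V} (h : cpC chi w p v = ⊤) : rpC chi w p v = ⊤ := by
  have hp₀ : 0 < p := by linarith
  simp [rpC, h, hp₀]

lemma le_rpC (hp : 1 < p) (v : V) : w v ≤ rpC chi w p v := by
  rw [← ENNReal.rpow_le_rpow_iff (show 0 < p by linarith), rpC_rpow hp]
  exact le_self_add

lemma cpAux_succ (m : ℕ) {v : V} (hv : (chi v).Nonempty) :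
    cpAux chi w p (m + 1) v
      = parallelResistance (conjExp p) fun u : ↥(chi v) => rpAux chi w p m u := by
  simp only [cpAux, hv.ne_empty, if_false, parallelResistance, rpAux, ← ENNReal.rpow_mul]
  ring_nf

lemma cpAux_succ_le (m : ℕ) (v : V) :
    cpAux chi w p (m + 1) v
      ≤ parallelResistance (conjExp p) fun u : ↥(chi v) => rpAux chi w p m u := by
  rcases (chi v).eq_empty_or_nonempty with hv | hv
  · simp [cpAux, hv]
  · exact (cpAux_succ m hv).le

lemma rpAux_le_rpAux (hp : 1 < p) {m n : ℕ} {v : V}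
    (h : cpAux chi w p m v ≤ cpAux chi w p n v) : rpAux chi w p m v ≤ rpAux chi w p n v := by
  rw [← ENNReal.rpow_le_rpow_iff (show 0 < p by linarith), rpAux_rpow hp, rpAux_rpow hp]
  exact add_le_add_right (ENNReal.rpow_le_rpow h (by linarith)) _

lemma cpAux_monotone (hp : 1 < p) : Monotone (cpAux chi w p) := by
  refine monotone_nat_of_le_succ fun m => ?_
  induction m with
  | zero => exact fun v => zero_le
  | succ m ih =>
    intro v
    rcases (chi v).eq_empty_or_nonempty with hv | hv
    · simp [cpAux, hv]
    rw [cpAux_succ _ hv, cpAux_succ _ hv]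
    exact parallelResistance_mono (holderConjugate_conjExp hp).symm.pos
      fun u => rpAux_le_rpAux hp (ih u)

lemma rpAux_monotone (hp : 1 < p) : Monotone (rpAux chi w p) := fun _ _ hmn v =>
  rpAux_le_rpAux hp (cpAux_monotone hp hmn v)

lemma rpC_eq_iSup_rpAux (hp : 1 < p) (v : V) : rpC chi w p v = ⨆ m, rpAux chi w p m v := by
  have hp₀ : 0 < p := by linarith
  simp only [rpC, cpC, rpAux, iSup_rpow hp₀, ENNReal.add_iSup, iSup_rpow (one_div_pos.2 hp₀)]

lemma cpC_eq_parallelResistance (hp : 1 < p) {v : V} (hv : (chi v).Nonempty)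
    (hw : ∑' u : ↥(chi v), w u ^ (-conjExp p) ≠ ⊤) :
    cpC chi w p v = parallelResistance (conjExp p) fun u : ↥(chi v) => rpC chi w p u := by
  simp only [rpC_eq_iSup_rpAux hp]
  rw [parallelResistance_iSup (r := fun m (u : ↥(chi v)) => rpAux chi w p m u)
    (holderConjugate_conjExp hp).symm.pos
    (fun m n hmn u => rpAux_monotone hp hmn u.1) (by simpa only [rpAux_zero hp] using hw),
    cpC, ← Monotone.iSup_nat_add (fun m n hmn => cpAux_monotone hp hmn v) 1]
  simp only [cpAux_succ _ hv]

/-- The energy of `f` with respect to the weight `w`, not counting the vertex `v`. -/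
noncomputable def energyOff (w : V → ℝ≥0∞) (p : ℝ) (v : V) (f : V → ℝ≥0∞) : ℝ≥0∞ :=
  ∑' u : ↥({v}ᶜ : Set V), (f u * w u) ^ p

variable {q : V → Option V}

lemma cpAux_mul_rpow_le (hp : 1 < p) {f : V → ℝ≥0∞} (hf : ∀ x, f x ≤ ∑' u : ↥(children q x), f u)
    (m : ℕ) (x : V) :
    (cpAux (children q) w p m x * f x) ^ p
      ≤ ∑ n ∈ Finset.range m, ∑' u : ↥(childrenIter q (n + 1) x), (f u * w u) ^ p := by
  have hp₀ : 0 < p := by linarith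
  induction m generalizing x with
  | zero => simp [cpAux, hp₀]
  | succ m ih =>
    have hroot : cpAux (children q) w p (m + 1) x * f x
        ≤ (∑' u : ↥(children q x), (f u * rpAux (children q) w p m u) ^ p) ^ (1 / p) :=
      (mul_le_mul' (cpAux_succ_le m x) (hf x)).trans
        (parallelResistance_mul_tsum_le (holderConjugate_conjExp hp) _)
    have hchild (u : V) : (f u * rpAux (children q) w p m u) ^ p
        ≤ ∑ n ∈ Finset.range (m + 1), ∑' y : ↥(childrenIter q n u), (f y * w y) ^ p := by
      rw [ENNReal.mul_rpow_of_nonneg _ _ hp₀.le, rpAux_rpow hp, mul_add,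
        ← ENNReal.mul_rpow_of_nonneg _ _ hp₀.le, ← ENNReal.mul_rpow_of_nonneg _ _ hp₀.le,
        mul_comm (f u) (cpAux _ _ _ _ _), Finset.sum_range_succ', add_comm, childrenIter_zero,
        tsum_singleton u fun y => (f y * w y) ^ p]
      gcongr
      exact ih u
    calc (cpAux (children q) w p (m + 1) x * f x) ^ p
        ≤ ∑' u : ↥(children q x), (f u * rpAux (children q) w p m u) ^ p := by
          rwa [one_div, ENNReal.le_rpow_inv_iff hp₀] at hroot
      _ ≤ ∑' u : ↥(children q x),
            ∑ n ∈ Finset.range (m + 1), ∑' y : ↥(childrenIter q n u), (f y * w y) ^ p :=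
          ENNReal.tsum_le_tsum fun u => hchild u
      _ = ∑ n ∈ Finset.range (m + 1), ∑' u : ↥(childrenIter q (n + 1) x), (f u * w u) ^ p := by
          rw [Summable.tsum_finsetSum fun _ _ => ENNReal.summable]
          exact Finset.sum_congr rfl fun n _ =>
            (tsum_childrenIter_succ n x fun u => (f u * w u) ^ p).symm

lemma cpC_mul_le_energyOff (hp : 1 < p) {v : V} (hv : AcyclicAt q v) {f : V → ℝ≥0∞}
    (hf : ∀ x, f x ≤ ∑' u : ↥(children q x), f u) :
    cpC (children q) w p v * f v ≤ energyOff w p v f ^ (1 / p) := by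
  rw [cpC, ENNReal.iSup_mul]
  refine iSup_le fun m => ?_
  rw [one_div, ENNReal.le_rpow_inv_iff (by linarith)]
  exact (cpAux_mul_rpow_le hp hf m v).trans ((ENNReal.sum_le_tsum _).trans
    (hv.tsum_tsum_childrenIter_le fun u => (f u * w u) ^ p))

end ContinuedFractions

/-! ### The optimal unit flow -/

section UnitFlow

variable {V : Type*}

/-- The part of a flow arriving at `x` that the optimal flow passes on to the child `u` of `x`:
`share` for the resistances `rpC` of the children of `x`. -/
noncomputable def childShare (q : V → Option V) (w : V → ℝ≥0∞) (p : ℝ) (x u : V) : ℝ≥0∞ :=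
  rpC (children q) w p u ^ (-conjExp p) *
    (∑' y : ↥(children q x), rpC (children q) w p y ^ (-conjExp p))⁻¹

/-- The part of the unit flow that leaves `v` and passes through `u` after `k` steps. -/
noncomputable def flowAt (q : V → Option V) (w : V → ℝ≥0∞) (p : ℝ) (v : V) : ℕ → V → ℝ≥0∞
  | 0, u => if u = v then 1 else 0
  | k + 1, u => (q u).elim 0 fun x => flowAt q w p v k x * childShare q w p x u

/-- The flow of minimal energy that leaves `v` with value one and runs down the tree. -/
noncomputable def unitFlow (q : V → Option V) (w : V → ℝ≥0∞) (p : ℝ) (v u : V) : ℝ≥0∞ :=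
  ∑' k, flowAt q w p v k u

variable {q : V → Option V} {w : V → ℝ≥0∞} {p : ℝ} {v : V}

lemma childShare_le_one {x u : V} (hu : u ∈ children q x) : childShare q w p x u ≤ 1 := by
  rw [childShare, ← div_eq_mul_inv]
  refine ENNReal.div_le_of_le_mul ?_
  rw [one_mul]
  exact ENNReal.le_tsum (f := fun y : ↥(children q x) => rpC (children q) w p y ^ (-conjExp p))
    ⟨u, hu⟩

lemma childShare_eq_zero (hp : 1 < p) (x : V) {u : V} (hu : cpC (children q) w p u = ⊤) :
    childShare q w p x u = 0 := by
  simp [childShare, rpC_eq_top hp hu, (holderConjugate_conjExp hp).symm.pos]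

lemma flowAt_succ_of_mem_children {u x : V} (hu : u ∈ children q x) (k : ℕ) :
    flowAt q w p v (k + 1) u = flowAt q w p v k x * childShare q w p x u := by
  rw [flowAt, show q u = some x from hu, Option.elim_some]

lemma flowAt_zero_of_ne {u : V} (hu : u ≠ v) : flowAt q w p v 0 u = 0 := if_neg hu

lemma parIter_eq_of_flowAt_ne_zero {k : ℕ} {u : V} (hu : flowAt q w p v k u ≠ 0) :
    parIter q k u = some v := by
  induction k generalizing u with
  | zero => simpa [flowAt, parIter] using hu
  | succ k ih =>
    cases hx : q u with
    | none => simp [flowAt, hx] at hu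
    | some x =>
      rw [flowAt_succ_of_mem_children hx] at hu
      simpa [parIter, hx] using ih (left_ne_zero_of_mul hu)

lemma flowAt_le_one (k : ℕ) (u : V) : flowAt q w p v k u ≤ 1 := by
  induction k generalizing u with
  | zero => unfold flowAt; split_ifs <;> simp
  | succ k ih =>
    cases hx : q u with
    | none => simp [flowAt, hx]
    | some x =>
      rw [flowAt_succ_of_mem_children hx]
      exact mul_le_one' (ih x) (childShare_le_one hx)

lemma flowAt_eq_zero_of_cpC_eq_top (hp : 1 < p) (hv : cpC (children q) w p v ≠ ⊤) (k : ℕ) {u : V}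
    (hu : cpC (children q) w p u = ⊤) : flowAt q w p v k u = 0 := by
  cases k with
  | zero => exact flowAt_zero_of_ne fun h => hv (h ▸ hu)
  | succ k =>
    cases hx : q u with
    | none => simp [flowAt, hx]
    | some x => rw [flowAt_succ_of_mem_children hx, childShare_eq_zero hp x hu, mul_zero]

lemma AcyclicAt.unitFlow_eq_flowAt (h : AcyclicAt q v) {k : ℕ} {u : V}
    (hk : flowAt q w p v k u ≠ 0) : unitFlow q w p v u = flowAt q w p v k u := by
  refine tsum_eq_single k fun j hj => by_contra fun hj₀ => hj ?_
  exact h.parIter_inj (parIter_eq_of_flowAt_ne_zero hj₀) (parIter_eq_of_flowAt_ne_zero hk)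

lemma exists_flowAt_ne_zero {u : V} (hu : unitFlow q w p v u ≠ 0) :
    ∃ k, flowAt q w p v k u ≠ 0 := by
  simpa [unitFlow, ENNReal.tsum_eq_zero] using hu

lemma exists_parIter_eq_of_unitFlow_ne_zero {u : V} (hu : unitFlow q w p v u ≠ 0) :
    ∃ k, parIter q k u = some v :=
  (exists_flowAt_ne_zero hu).imp fun _ => parIter_eq_of_flowAt_ne_zero

lemma AcyclicAt.unitFlow_self (h : AcyclicAt q v) : unitFlow q w p v v = 1 := by
  rw [h.unitFlow_eq_flowAt (k := 0)] <;> simp [flowAt]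

lemma AcyclicAt.unitFlow_le_one (h : AcyclicAt q v) (u : V) : unitFlow q w p v u ≤ 1 := by
  by_cases hu : unitFlow q w p v u = 0
  · simp [hu]
  · obtain ⟨k, hk⟩ := exists_flowAt_ne_zero hu
    exact (h.unitFlow_eq_flowAt hk).trans_le (flowAt_le_one k u)

variable (hp : 1 < p) (hne : ∀ x, (children q x).Nonempty)
  (hw : ∀ x, ∑' u : ↥(children q x), w u ^ (-conjExp p) ≠ ⊤)

include hp hw in
lemma tsum_rpC_rpow_neg_ne_top (x : V) :
    ∑' u : ↥(children q x), rpC (children q) w p u ^ (-conjExp p) ≠ ⊤ := by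
  refine ne_top_of_le_ne_top (hw x) (ENNReal.tsum_le_tsum fun u => ?_)
  have hq := (holderConjugate_conjExp hp).symm.pos
  simp only [ENNReal.rpow_neg]
  gcongr
  exact le_rpC hp u.1

include hp hne hw

lemma tsum_rpC_rpow_neg_ne_zero {x : V} (hx : cpC (children q) w p x ≠ ⊤) :
    ∑' u : ↥(children q x), rpC (children q) w p u ^ (-conjExp p) ≠ 0 := by
  intro h₀
  apply hx
  rw [cpC_eq_parallelResistance hp (hne x) (hw x), parallelResistance, h₀]
  exact ENNReal.zero_rpow_of_neg
    (neg_lt_zero.2 (one_div_pos.2 (holderConjugate_conjExp hp).symm.pos))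

lemma tsum_childShare {x : V} (hx : cpC (children q) w p x ≠ ⊤) :
    ∑' u : ↥(children q x), childShare q w p x u = 1 :=
  tsum_share (tsum_rpC_rpow_neg_ne_zero hp hne hw hx) (tsum_rpC_rpow_neg_ne_top hp hw x)

lemma tsum_childShare_mul_rpC {x : V} (hx : cpC (children q) w p x ≠ ⊤) :
    ∑' u : ↥(children q x), (childShare q w p x u * rpC (children q) w p u) ^ p
      = cpC (children q) w p x ^ p := by
  rw [cpC_eq_parallelResistance hp (hne x) (hw x)]
  exact tsum_share_mul_rpow (holderConjugate_conjExp hp)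
    (tsum_rpC_rpow_neg_ne_zero hp hne hw hx) (tsum_rpC_rpow_neg_ne_top hp hw x)

variable (hv : cpC (children q) w p v ≠ ⊤)
include hv

lemma tsum_children_flowAt_succ (k : ℕ) (x : V) :
    ∑' u : ↥(children q x), flowAt q w p v (k + 1) u = flowAt q w p v k x := by
  simp only [fun u : ↥(children q x) => flowAt_succ_of_mem_children (w := w) (p := p) (v := v)
    u.2 k, ENNReal.tsum_mul_left]
  by_cases hx : cpC (children q) w p x = ⊤
  · rw [flowAt_eq_zero_of_cpC_eq_top hp hv k hx, zero_mul]
  · rw [tsum_childShare hp hne hw hx, mul_one]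

lemma tsum_children_unitFlow (x : V) :
    ∑' u : ↥(children q x), unitFlow q w p v u
      = unitFlow q w p v x + if q v = some x then 1 else 0 := by
  simp only [unitFlow]
  rw [ENNReal.tsum_comm, tsum_eq_zero_add' ENNReal.summable, add_comm]
  simp only [tsum_children_flowAt_succ hp hne hw hv]
  congr 1
  split_ifs with hx
  · rw [tsum_eq_single ⟨v, hx⟩ fun u hu => flowAt_zero_of_ne fun h => hu (Subtype.ext h)]
    simp [flowAt]
  · refine ENNReal.tsum_eq_zero.2 fun u => flowAt_zero_of_ne fun h => hx ?_
    exact h ▸ u.2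

lemma tsum_flowAt_succ_mul_rpC (k : ℕ) :
    ∑' u, (flowAt q w p v (k + 1) u * rpC (children q) w p u) ^ p
      = ∑' u, (flowAt q w p v k u * cpC (children q) w p u) ^ p := by
  have hp₀ : 0 < p := by linarith
  rw [tsum_eq_tsum_children q fun u hu => by simp [flowAt, hu, hp₀]]
  refine tsum_congr fun x => ?_
  have hterm (u : ↥(children q x)) :
      (flowAt q w p v (k + 1) u * rpC (children q) w p u) ^ p
        = flowAt q w p v k x ^ p * (childShare q w p x u * rpC (children q) w p u) ^ p := by
    rw [flowAt_succ_of_mem_children u.2, mul_assoc, ENNReal.mul_rpow_of_nonneg _ _ hp₀.le]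
  rw [tsum_congr hterm, ENNReal.tsum_mul_left, ENNReal.mul_rpow_of_nonneg _ _ hp₀.le]
  by_cases hx : cpC (children q) w p x = ⊤
  · simp [flowAt_eq_zero_of_cpC_eq_top hp hv k hx, hp₀]
  · rw [tsum_childShare_mul_rpC hp hne hw hx]

lemma sum_flowAt_energy_add (m : ℕ) :
    ∑ k ∈ Finset.range m, ∑' u, (flowAt q w p v (k + 1) u * w u) ^ p
        + ∑' u, (flowAt q w p v m u * cpC (children q) w p u) ^ p
      = cpC (children q) w p v ^ p := by
  have hp₀ : 0 < p := by linarith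
  induction m with
  | zero =>
    rw [tsum_eq_single v fun u hu => by simp [flowAt_zero_of_ne hu, hp₀]]
    simp [flowAt]
  | succ m ih =>
    rw [← ih, Finset.sum_range_succ, add_assoc, ← ENNReal.tsum_add,
      ← tsum_flowAt_succ_mul_rpC hp hne hw hv m]
    simp only [ENNReal.mul_rpow_of_nonneg _ _ hp₀.le, rpC_rpow hp, mul_add]

lemma energyOff_unitFlow_le (hac : AcyclicAt q v) :
    energyOff w p v (unitFlow q w p v) ≤ cpC (children q) w p v ^ p := by
  have hp₀ : 0 < p := by linarith
  have hlevels (u : V) (huv : u ≠ v) :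
      (unitFlow q w p v u * w u) ^ p ≤ ∑' k, (flowAt q w p v (k + 1) u * w u) ^ p := by
    by_cases hu : unitFlow q w p v u = 0
    · simp [hu, hp₀]
    obtain ⟨k, hk⟩ := exists_flowAt_ne_zero hu
    obtain ⟨k, rfl⟩ := Nat.exists_eq_succ_of_ne_zero
      fun h₀ : k = 0 => hk (h₀ ▸ flowAt_zero_of_ne huv)
    rw [hac.unitFlow_eq_flowAt hk]
    exact ENNReal.le_tsum (f := fun k => (flowAt q w p v (k + 1) u * w u) ^ p) k
  calc energyOff w p v (unitFlow q w p v)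
      ≤ ∑' u : ↥({v}ᶜ : Set V), ∑' k, (flowAt q w p v (k + 1) u * w u) ^ p :=
        ENNReal.tsum_le_tsum fun u => hlevels u u.2
    _ ≤ ∑' u, ∑' k, (flowAt q w p v (k + 1) u * w u) ^ p :=
        ENNReal.tsum_comp_le_tsum_of_injective Subtype.val_injective _
    _ = ∑' k, ∑' u, (flowAt q w p v (k + 1) u * w u) ^ p := ENNReal.tsum_comm
    _ ≤ cpC (children q) w p v ^ p := by
        rw [ENNReal.tsum_eq_iSup_nat]
        exact iSup_le fun m => le_self_add.trans_eq (sum_flowAt_energy_add hp hne hw hv m)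

end UnitFlow

/-! ### A criterion for chaos -/

section ChaosCriterion

variable {𝕜 : Type*} [RCLike 𝕜] {X : Type*}

section NormedSpace

variable [NormedAddCommGroup X] [NormedSpace 𝕜 X] {β : Type*}

/-- The vectors `x` for which the equations `A n S = L n x` have solutions `S = S n` that tend to
zero along `l`. -/
def smallSolutions (l : Filter β) (A L : β → X →L[𝕜] X) : Submodule 𝕜 X where
  carrier := {x | ∀ ε > 0, ∀ᶠ n in l, ∃ S, ‖S‖ < ε ∧ A n S = L n x}
  zero_mem' := fun ε hε => .of_forall fun n => ⟨0, by simpa using hε, by simp⟩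
  add_mem' := fun {x y} hx hy ε hε => by
    filter_upwards [hx (ε / 2) (half_pos hε), hy (ε / 2) (half_pos hε)]
    rintro n ⟨S, hS, hxS⟩ ⟨R, hR, hyR⟩
    exact ⟨S + R, by linarith [norm_add_le S R], by rw [map_add, map_add, hxS, hyR]⟩
  smul_mem' := fun a x hx ε hε => by
    have ha : 0 < ‖a‖ + 1 := by positivity
    filter_upwards [hx (ε / (‖a‖ + 1)) (by positivity)]
    rintro n ⟨S, hS, hxS⟩
    refine ⟨a • S, ?_, by rw [map_smul, map_smul, hxS]⟩
    rw [norm_smul]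
    nlinarith [(lt_div_iff₀ ha).1 hS, norm_nonneg S]

lemma mem_smallSolutions {l : Filter β} {A L : β → X →L[𝕜] X} {x : X} :
    x ∈ smallSolutions l A L ↔ ∀ ε > 0, ∀ᶠ n in l, ∃ S, ‖S‖ < ε ∧ A n S = L n x :=
  Iff.rfl

end NormedSpace

lemma hypercyclic_of_transitive_s13 [AddCommGroup X] [Module 𝕜 X] [TopologicalSpace X] [BaireSpace X]
    [SecondCountableTopology X] [Nonempty X] (T : X →L[𝕜] X)
    (hT : ∀ U₁ U₂ : Set X, IsOpen U₁ → IsOpen U₂ → U₁.Nonempty → U₂.Nonempty →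
      ∃ n : ℕ, ∃ z ∈ U₁, (T ^ n) z ∈ U₂) : Hypercyclic T := by
  have hbasis := TopologicalSpace.isBasis_countableBasis X
  have : Countable ↥(TopologicalSpace.countableBasis X) :=
    (TopologicalSpace.countable_countableBasis X).to_subtype
  have hdense : Dense (⋂ b : ↥(TopologicalSpace.countableBasis X), ⋃ n : ℕ, (T ^ n) ⁻¹' b) := by
    refine dense_iInter_of_isOpen
      (fun b => isOpen_iUnion fun n => (hbasis.isOpen b.2).preimage (T ^ n).continuous)
      fun b => dense_iff_inter_open.2 fun U hU hne => ?_
    obtain ⟨n, z, hzU, hzb⟩ := hT U b hU (hbasis.isOpen b.2) hne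
      (TopologicalSpace.nonempty_of_mem_countableBasis b.2)
    exact ⟨z, hzU, Set.mem_iUnion.2 ⟨n, hzb⟩⟩
  obtain ⟨x, hx⟩ := hdense.nonempty
  refine ⟨x, hbasis.dense_iff.2 fun U hU _ => ?_⟩
  obtain ⟨n, hn⟩ := Set.mem_iUnion.1 (Set.mem_iInter.1 hx ⟨U, hU⟩)
  exact ⟨(T ^ n) x, hn, n, rfl⟩

variable [NormedAddCommGroup X] [NormedSpace 𝕜 X]

lemma exists_approximate_transition {T : X →L[𝕜] X} {l : Filter ℕ} [l.NeBot]
    (hl : ∀ᶠ n in l, 1 ≤ n) {x y : X}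
    (hx : x ∈ smallSolutions l (fun n => T ^ n - 1) fun n => -T ^ n)
    (hy : y ∈ smallSolutions l (fun n => T ^ n - 1) fun _ => 1) {ε : ℝ} (hε : 0 < ε) :
    ∃ n ≥ 1, ∃ z, ‖z‖ < ε ∧ (T ^ n) (x + z) = y + z := by
  obtain ⟨n, hn, ⟨S, hS, hxS⟩, R, hR, hyR⟩ := (hl.and ((hx (ε / 2) (half_pos hε)).and
    (hy (ε / 2) (half_pos hε)))).exists
  refine ⟨n, hn, S + R, by linarith [norm_add_le S R], ?_⟩
  simp only [sub_apply, one_apply_eq_self, neg_apply, sub_eq_iff_eq_add] at hxS hyR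
  rw [map_add, map_add, hxS, hyR]
  abel

-- A perturbation `z` of both `x` and `y` that `T ^ n` carries from one to the other gives
-- transitivity for arbitrary `x` and `y`, and a periodic point near `x` when `y = x`.
lemma chaoticOp_of_smallSolutions [CompleteSpace X] {T : X →L[𝕜] X} {l : Filter ℕ} [l.NeBot]
    (hl : ∀ᶠ n in l, 1 ≤ n) {s : Set X} (hs : s.Countable)
    (hdense : Dense (Submodule.span 𝕜 s : Set X))
    (hs₁ : s ⊆ smallSolutions l (fun n => T ^ n - 1) fun n => -T ^ n)
    (hs₂ : s ⊆ smallSolutions l (fun n => T ^ n - 1) fun _ => 1) : ChaoticOp T := by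
  have htrans {x y : X} (hx : x ∈ Submodule.span 𝕜 s) (hy : y ∈ Submodule.span 𝕜 s) {ε : ℝ}
      (hε : 0 < ε) : ∃ n ≥ 1, ∃ z, ‖z‖ < ε ∧ (T ^ n) (x + z) = y + z :=
    exists_approximate_transition hl (Submodule.span_le.2 hs₁ hx) (Submodule.span_le.2 hs₂ hy) hε
  have : TopologicalSpace.SeparableSpace X := TopologicalSpace.isSeparable_univ_iff.1 <| by
    simpa only [hdense.closure_eq] using (hs.isSeparable.span (R := 𝕜)).closure
  have : SecondCountableTopology X := UniformSpace.secondCountable_of_separable X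
  refine ⟨hypercyclic_of_transitive_s13 T fun U₁ U₂ hU₁ hU₂ hne₁ hne₂ => ?_,
    dense_iff_inter_open.2 fun U hU hne => ?_⟩
  · obtain ⟨x, hxU, hx⟩ := hdense.inter_open_nonempty U₁ hU₁ hne₁
    obtain ⟨y, hyU, hy⟩ := hdense.inter_open_nonempty U₂ hU₂ hne₂
    obtain ⟨ε₁, hε₁, hball₁⟩ := Metric.isOpen_iff.1 hU₁ x hxU
    obtain ⟨ε₂, hε₂, hball₂⟩ := Metric.isOpen_iff.1 hU₂ y hyU
    obtain ⟨n, -, z, hz, hTz⟩ := htrans hx hy (lt_min hε₁ hε₂)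
    refine ⟨n, x + z, hball₁ ?_, hball₂ ?_⟩
    · simpa using hz.trans_le (min_le_left _ _)
    · simpa [hTz] using hz.trans_le (min_le_right _ _)
  · obtain ⟨x, hxU, hx⟩ := hdense.inter_open_nonempty U hU hne
    obtain ⟨ε, hε, hball⟩ := Metric.isOpen_iff.1 hU x hxU
    obtain ⟨n, hn, z, hz, hTz⟩ := htrans hx hx hε
    exact ⟨x + z, hball (by simpa using hz), n, hn, hTz⟩

end ChaosCriterion

section LpSpace

variable {𝕜 V X : Type*} [RCLike 𝕜] [NormedAddCommGroup X] [NormedSpace 𝕜 X]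
  {ι : X →ₗ[𝕜] V → 𝕜} {μ : V → 𝕜} {p : ℝ}

lemma nw_ne_zero {v : V} (hμ : μ v ≠ 0) : nw μ v ≠ 0 := by
  simpa [nw] using hμ

lemma nw_ne_top (v : V) : nw μ v ≠ ⊤ := ENNReal.coe_ne_top

lemma IsLpSpaceRep.enorm_rpow (hX : IsLpSpaceRep ι μ p) (hp : 0 < p) (x : X) :
    ‖x‖ₑ ^ p = ∑' v, (‖ι x v‖ₑ * nw μ v) ^ p := by
  rw [enorm_eq_nnnorm, hX.2.2 x, ← ENNReal.rpow_mul, one_div_mul_cancel hp.ne', ENNReal.rpow_one]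
  simp [nw, enorm_eq_nnnorm]

lemma IsLpSpaceRep.exists_eq (hX : IsLpSpaceRep ι μ p) {f : V → 𝕜}
    (hf : ∑' v, (‖f v‖ₑ * nw μ v) ^ p ≠ ⊤) : ∃ x : X, ι x = f := by
  refine (hX.2.1 f).1 (lt_top_iff_ne_top.2 ?_)
  simpa [nw, enorm_eq_nnnorm] using hf

lemma IsLpSpaceRep.exists_eq_indicator (hX : IsLpSpaceRep ι μ p) (hp : 0 < p) (x : X)
    (S : Set V) : ∃ y : X, ι y = S.indicator (ι x) := by
  have hle : ∑' v, (‖S.indicator (ι x) v‖ₑ * nw μ v) ^ p ≤ ‖x‖ₑ ^ p := by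
    rw [hX.enorm_rpow hp]
    gcongr
    exact enorm_indicator_le_enorm_self _ _
  exact hX.exists_eq (ne_top_of_le_ne_top (ENNReal.rpow_ne_top_of_nonneg hp.le enorm_ne_top) hle)

lemma IsLpSpaceRep.enorm_mul_nw_le (hX : IsLpSpaceRep ι μ p) (hp : 0 < p) (x : X) (v : V) :
    ‖ι x v‖ₑ * nw μ v ≤ ‖x‖ₑ := by
  rw [← ENNReal.rpow_le_rpow_iff hp, hX.enorm_rpow hp]
  exact ENNReal.le_tsum v

lemma IsLpSpaceRep.exists_coord (hX : IsLpSpaceRep ι μ p) (hp : 0 < p) {v : V} (hμ : μ v ≠ 0) :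
    ∃ φ : X →L[𝕜] 𝕜, ∀ x, φ x = ι x v := by
  refine ⟨((LinearMap.proj v).comp ι).mkContinuous ‖μ v‖⁻¹ fun x => ?_, fun x => rfl⟩
  have hle := hX.enorm_mul_nw_le hp x v
  rw [nw, ← enorm_eq_nnnorm, ← enorm_mul, enorm_le_iff_norm_le, norm_mul] at hle
  rw [inv_mul_eq_div, le_div_iff₀ (norm_pos_iff.2 hμ)]
  exact hle

/-- The unit vector `e_u` of `ℓ^p(V, μ)`, the preimage of `Pi.single u 1` under the coefficient
embedding. -/
noncomputable def basisVec (ι : X →ₗ[𝕜] V → 𝕜) (u : V) : X :=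
  Function.invFun ι (Pi.single u 1)

lemma IsLpSpaceRep.coeff_basisVec (hX : IsLpSpaceRep ι μ p) (hp : 0 < p) (u : V) :
    ι (basisVec ι u) = Pi.single u 1 := by
  refine Function.invFun_eq (hX.exists_eq ?_)
  rw [tsum_eq_single u]
  · simpa using ENNReal.rpow_ne_top_of_nonneg hp.le (nw_ne_top u)
  · intro v hv
    simp [hv, hp]

lemma IsLpSpaceRep.hasSum_basisVec (hX : IsLpSpaceRep ι μ p) (hp : 0 < p) (x : X) :
    HasSum (fun u => ι x u • basisVec ι u) x := by
  have htail : ∀ s : Finset V, ‖(∑ u ∈ s, ι x u • basisVec ι u) - x‖ₑ ^ p =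
      ∑' v : {v // v ∉ s}, (‖ι x v‖ₑ * nw μ v) ^ p := by
    intro s
    have hcoeff : ∀ v, ι ((∑ u ∈ s, ι x u • basisVec ι u) - x) v = if v ∈ s then 0 else -ι x v := by
      intro v
      simp only [map_sub, map_sum, map_smul, hX.coeff_basisVec hp, Pi.sub_apply, Finset.sum_apply,
        Pi.smul_apply, Pi.single_apply, smul_eq_mul, mul_ite, mul_one, mul_zero,
        Finset.sum_ite_eq]
      split_ifs <;> simp
    rw [hX.enorm_rpow hp, ← tsum_subtype_eq_of_support_subset (s := {v | v ∉ s})]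
    · exact tsum_congr fun v => by rw [hcoeff, if_neg v.2, enorm_neg]
    · intro v hv hvs
      simp [hcoeff, hvs, hp] at hv
  have htop : ∑' v, (‖ι x v‖ₑ * nw μ v) ^ p ≠ ⊤ := by
    rw [← hX.enorm_rpow hp]
    exact ENNReal.rpow_ne_top_of_nonneg hp.le enorm_ne_top
  have hlim := ((ENNReal.tendsto_tsum_compl_atTop_zero htop).ennrpow_const (1 / p)).congr
    fun s => by rw [← htail, ← ENNReal.rpow_mul, mul_one_div_cancel hp.ne', ENNReal.rpow_one]
  rw [ENNReal.zero_rpow_of_pos (by positivity)] at hlim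
  rw [HasSum, tendsto_iff_edist_tendsto_0]
  simpa only [edist_eq_enorm_sub, SummationFilter.unconditional_filter] using hlim

lemma IsLpSpaceRep.energyOff_le (hX : IsLpSpaceRep ι μ p) (hp : 0 < p) (x : X) (v : V) :
    energyOff (nw μ) p v (fun u => ‖ι x u‖ₑ) ≤ ‖x - basisVec ι v‖ₑ ^ p := by
  rw [hX.enorm_rpow hp]
  refine le_trans (le_of_eq (tsum_congr fun u => ?_)) (ENNReal.tsum_comp_le_tsum_of_injective
    Subtype.val_injective _)
  rw [map_sub, Pi.sub_apply, hX.coeff_basisVec hp, Pi.single_eq_of_ne u.2, sub_zero]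

lemma IsLpSpaceRep.enorm_sub_basisVec (hX : IsLpSpaceRep ι μ p) (hp : 0 < p) {x : X} {v : V}
    (hx : ι x v = 1) :
    ‖x - basisVec ι v‖ₑ ^ p = energyOff (nw μ) p v fun u => ‖ι x u‖ₑ := by
  refine le_antisymm ?_ (hX.energyOff_le hp x v)
  rw [hX.enorm_rpow hp, energyOff, ← tsum_subtype_eq_of_support_subset (s := {v}ᶜ)]
  · refine le_of_eq (tsum_congr fun u => ?_)
    rw [map_sub, Pi.sub_apply, hX.coeff_basisVec hp, Pi.single_eq_of_ne u.2, sub_zero]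
  · rintro u hu rfl
    simp [hX.coeff_basisVec hp, hx, hp] at hu

lemma IsLpSpaceRep.exists_eq_of_energyOff_ne_top (hX : IsLpSpaceRep ι μ p) (hp : 0 < p) {f : V → 𝕜}
    {v : V} (hf : energyOff (nw μ) p v (fun u => ‖f u‖ₑ) ≠ ⊤) : ∃ x : X, ι x = f := by
  refine hX.exists_eq ?_
  rw [← Summable.tsum_add_tsum_compl (s := {v}) ENNReal.summable ENNReal.summable]
  refine ENNReal.add_ne_top.2 ⟨?_, hf⟩
  rw [tsum_singleton v fun u => (‖f u‖ₑ * nw μ u) ^ p]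
  exact ENNReal.rpow_ne_top_of_nonneg hp.le (ENNReal.mul_ne_top enorm_ne_top (nw_ne_top v))

end LpSpace

section Pushforward

variable {𝕜 V X : Type*} [RCLike 𝕜] [NormedAddCommGroup X] [NormedSpace 𝕜 X]
  {ι : X →ₗ[𝕜] V → 𝕜} {μ : V → 𝕜} {p : ℝ}

/-- The operator `A` maps each unit vector `e_u` to `e_{F u}`. Powers of the backward shift are of
this kind, with `F` an iterate of the parent map. -/
def IsPushforward (ι : X →ₗ[𝕜] V → 𝕜) (F : V → V) (A : X →L[𝕜] X) : Prop :=
  ∀ u, A (basisVec ι u) = basisVec ι (F u)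

lemma IsPushforward.pow {F : V → V} {A : X →L[𝕜] X} (hA : IsPushforward ι F A) (n : ℕ) :
    IsPushforward ι F^[n] (A ^ n) := by
  induction n with
  | zero => exact fun u => rfl
  | succ n ih =>
    intro u
    rw [pow_succ, mul_apply_eq_comp, hA, ih, Function.iterate_succ_apply]

lemma IsPushforward.hasSum_fiber {F : V → V} {A : X →L[𝕜] X} (hA : IsPushforward ι F A)
    (hX : IsLpSpaceRep ι μ p) (hp : 0 < p) {w : V} (hμ : μ w ≠ 0) (x : X) :
    HasSum ((F ⁻¹' {w}).indicator (ι x)) (ι (A x) w) := by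
  obtain ⟨φ, hφ⟩ := hX.exists_coord hp hμ
  convert (φ.comp A).hasSum (hX.hasSum_basisVec hp x) using 1
  · ext u
    simp only [ContinuousLinearMap.comp_apply, map_smul, hφ, hA u, hX.coeff_basisVec hp]
    simp [Set.indicator_apply, Pi.single_apply, eq_comm]
  · simp [hφ]

lemma IsShiftRep.isPushforward {par : V → Option V} {P : V → V} {T : X →L[𝕜] X}
    (hT : IsShiftRep par (fun _ => (1 : 𝕜)) ι T) (hP : ∀ u, par u = some (P u))
    (hX : IsLpSpaceRep ι μ p) (hp : 0 < p) : IsPushforward ι P T := by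
  intro u
  apply hX.1
  ext v
  have hsum : HasSum ((children par v).indicator (ι (basisVec ι u))) (ι (T (basisVec ι u)) v) :=
    hasSum_subtype_iff_indicator.1 (by simpa [Function.comp_def] using hT (basisVec ι u) v)
  have hind : (children par v).indicator (ι (basisVec ι u)) =
      Pi.single u (ι (basisVec ι (P u)) v) := by
    ext x
    simp only [hX.coeff_basisVec hp, Set.indicator_apply, children, Set.mem_ofPred_eq, hP,
      Option.some.injEq, Pi.single_apply]
    grind
  rw [hind] at hsum
  exact hsum.unique (hasSum_pi_single u _)

end Pushforward

section DualWeights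

variable {𝕜 V X : Type*} [RCLike 𝕜] [NormedAddCommGroup X] [NormedSpace 𝕜 X]
  {ι : X →ₗ[𝕜] V → 𝕜} {μ : V → 𝕜} {p : ℝ}

lemma enorm_ofReal_toReal {a : ℝ≥0∞} (ha : a ≠ ⊤) : ‖((a.toReal : ℝ) : 𝕜)‖ₑ = a := by
  rw [← ofReal_norm, RCLike.norm_ofReal, abs_of_nonneg ENNReal.toReal_nonneg,
    ENNReal.ofReal_toReal ha]

lemma rpow_neg_conjExp_mul_self_rpow (hp : 1 < p) {a : ℝ≥0∞} (h₀ : a ≠ 0) (h : a ≠ ⊤) :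
    (a ^ (-conjExp p) * a) ^ p = a ^ (-conjExp p) := by
  have hp' : p - 1 ≠ 0 := by linarith
  nth_rewrite 2 [← ENNReal.rpow_one a]
  rw [← ENNReal.rpow_add _ _ h₀ h, ← ENNReal.rpow_mul, conjExp]
  congr 1
  field_simp
  ring

lemma le_rpow_of_rpow_le_mul_self (hp : 1 < p) {a c : ℝ≥0∞} (ha : a ≠ ⊤) (h : a ^ p ≤ c * a) :
    a ≤ c ^ (p - 1)⁻¹ := by
  rcases eq_or_ne a 0 with rfl | h₀
  · exact zero_le
  · rw [ENNReal.le_rpow_inv_iff (by linarith), ENNReal.rpow_sub _ _ h₀ ha, ENNReal.rpow_one]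
    exact ENNReal.div_le_of_le_mul h

lemma IsLpSpaceRep.enorm_sum_smul_basisVec (hX : IsLpSpaceRep ι μ p) (hp : 0 < p) (c : V → 𝕜)
    (s : Finset V) :
    ‖∑ u ∈ s, c u • basisVec ι u‖ₑ ^ p = ∑ u ∈ s, (‖c u‖ₑ * nw μ u) ^ p := by
  have hcoeff : ∀ v, ι (∑ u ∈ s, c u • basisVec ι u) v = if v ∈ s then c v else 0 := by
    intro v
    simp [hX.coeff_basisVec hp, Pi.single_apply]
  rw [hX.enorm_rpow hp, tsum_eq_sum (s := s)]
  · exact Finset.sum_congr rfl fun u hu => by rw [hcoeff, if_pos hu]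
  · intro u hu
    simp [hcoeff, hu, hp]

-- The extremal vectors for this bound are `∑ |μ_u|^{-p*} e_u`.
lemma IsLpSpaceRep.sum_rpow_neg_conjExp_le (hX : IsLpSpaceRep ι μ p) (hp : 1 < p)
    (hμ : ∀ v, μ v ≠ 0) (φ : X →L[𝕜] 𝕜) {s : Finset V} (hφ : ∀ u ∈ s, φ (basisVec ι u) = 1) :
    ∑ u ∈ s, nw μ u ^ (-conjExp p) ≤ (‖φ‖ₑ ^ p) ^ (p - 1)⁻¹ := by
  have hp0 : 0 < p := by linarith
  have ha : ∀ u, nw μ u ^ (-conjExp p) ≠ ⊤ := fun u =>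
    ENNReal.rpow_ne_top_of_ne_zero (nw_ne_zero (hμ u)) (nw_ne_top u)
  set A : ℝ≥0∞ := ∑ u ∈ s, nw μ u ^ (-conjExp p) with hA
  have hAtop : A ≠ ⊤ := ENNReal.sum_ne_top.2 fun u _ => ha u
  let c : V → 𝕜 := fun u => ((nw μ u ^ (-conjExp p)).toReal : ℝ)
  set x : X := ∑ u ∈ s, c u • basisVec ι u with hx
  have hnorm : ‖x‖ₑ ^ p = A := by
    rw [hx, hX.enorm_sum_smul_basisVec hp0]
    refine Finset.sum_congr rfl fun u _ => ?_
    rw [enorm_ofReal_toReal (ha u)]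
    exact rpow_neg_conjExp_mul_self_rpow hp (nw_ne_zero (hμ u)) (nw_ne_top u)
  have hφx : φ x = (A.toReal : ℝ) := by
    rw [hA, ENNReal.toReal_sum fun u _ => ha u, RCLike.ofReal_sum, hx, map_sum]
    exact Finset.sum_congr rfl fun u hu => by rw [map_smul, hφ u hu, smul_eq_mul, mul_one]
  have hle : A ≤ ‖φ‖ₑ * ‖x‖ₑ := by
    simpa only [hφx, enorm_ofReal_toReal hAtop] using φ.le_opENorm x
  refine le_rpow_of_rpow_le_mul_self hp hAtop ?_
  calc A ^ p ≤ (‖φ‖ₑ * ‖x‖ₑ) ^ p := by gcongr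
    _ = ‖φ‖ₑ ^ p * A := by rw [ENNReal.mul_rpow_of_nonneg _ _ hp0.le, hnorm]

lemma IsLpSpaceRep.tsum_rpow_neg_conjExp_ne_top (hX : IsLpSpaceRep ι μ p) (hp : 1 < p)
    (hμ : ∀ v, μ v ≠ 0) (φ : X →L[𝕜] 𝕜) {S : Set V} (hφ : ∀ u ∈ S, φ (basisVec ι u) = 1) :
    ∑' u : S, nw μ u ^ (-conjExp p) ≠ ⊤ := by
  have hle : ∑' u : S, nw μ u ^ (-conjExp p) ≤ (‖φ‖ₑ ^ p) ^ (p - 1)⁻¹ := by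
    rw [ENNReal.tsum_eq_iSup_sum]
    refine iSup_le fun s => ?_
    have hs := hX.sum_rpow_neg_conjExp_le hp hμ φ (s := s.map (Function.Embedding.subtype _))
      fun u hu => hφ u (Finset.property_of_mem_map_subtype s hu)
    rwa [Finset.sum_map] at hs
  refine ne_top_of_le_ne_top ?_ hle
  exact ENNReal.rpow_ne_top_of_nonneg (inv_nonneg.2 (by linarith))
    (ENNReal.rpow_ne_top_of_nonneg (by linarith) enorm_ne_top)

lemma IsPushforward.tsum_fiber_rpow_neg_conjExp_ne_top {F : V → V} {A : X →L[𝕜] X}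
    (hA : IsPushforward ι F A) (hX : IsLpSpaceRep ι μ p) (hp : 1 < p) (hμ : ∀ v, μ v ≠ 0) (w : V) :
    ∑' u : ↥(F ⁻¹' {w}), nw μ u ^ (-conjExp p) ≠ ⊤ := by
  have hp0 : 0 < p := by linarith
  obtain ⟨φ, hφ⟩ := hX.exists_coord hp0 (hμ w)
  refine hX.tsum_rpow_neg_conjExp_ne_top hp hμ (φ.comp A) fun u hu => ?_
  rw [ContinuousLinearMap.comp_apply, hφ, hA, hX.coeff_basisVec hp0, Set.mem_singleton_iff.1 hu,
    Pi.single_eq_same]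

end DualWeights

section PeriodicPoints

variable {𝕜 V X : Type*} [RCLike 𝕜] [NormedAddCommGroup X] [NormedSpace 𝕜 X]
  {ι : X →ₗ[𝕜] V → 𝕜} {μ : V → 𝕜} {p : ℝ} {par : V → Option V} {T : X →L[𝕜] X} {x : X} {N : ℕ}

lemma enorm_le_tsum_enorm {α E : Type*} [NormedAddCommGroup E] {f : α → E} {a : E}
    (h : HasSum f a) : ‖a‖ₑ ≤ ∑' i, ‖f i‖ₑ :=
  h.tsum_eq ▸ enorm_tsum_le_tsum_enorm

lemma pow_mod_apply_of_pow_apply_eq (hx : (T ^ N) x = x) (j : ℕ) : (T ^ (j % N)) x = (T ^ j) x := by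
  have hper : Function.IsPeriodicPt T N x := by
    rwa [Function.IsPeriodicPt, Function.IsFixedPt, ← FunLike.coe_pow_eq_iterate]
  simpa only [FunLike.coe_pow_eq_iterate] using hper.iterate_mod_apply j

lemma iSup_enorm_orbit_le_tsum_children (hT : IsShiftRep par (fun _ => (1 : 𝕜)) ι T) (hN : 1 ≤ N)
    (hx : (T ^ N) x = x) (w : V) :
    ⨆ j, ‖ι ((T ^ j) x) w‖ₑ ≤ ∑' u : ↥(children par w), ⨆ j, ‖ι ((T ^ j) x) u‖ₑ := by
  refine iSup_le fun j => ?_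
  have hprev : (T ^ j) x = T ((T ^ (j + (N - 1))) x) := by
    rw [← mul_apply_eq_comp, ← pow_succ', show j + (N - 1) + 1 = j + N by omega, pow_add,
      mul_apply_eq_comp, hx]
  have hsum := hT ((T ^ (j + (N - 1))) x) w
  simp only [one_mul] at hsum
  rw [hprev]
  refine (enorm_le_tsum_enorm hsum).trans (ENNReal.tsum_le_tsum fun u => ?_)
  exact le_iSup (fun j => ‖ι ((T ^ j) x) u‖ₑ) (j + (N - 1))

lemma IsLpSpaceRep.energyOff_iSup_orbit_ne_top (hX : IsLpSpaceRep ι μ p) (hp : 0 < p)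
    (hN : 1 ≤ N) (hx : (T ^ N) x = x) (v : V) :
    energyOff (nw μ) p v (fun u => ⨆ j, ‖ι ((T ^ j) x) u‖ₑ) ≠ ⊤ := by
  have hle : ∀ u, ((⨆ j, ‖ι ((T ^ j) x) u‖ₑ) * nw μ u) ^ p ≤
      ∑ j ∈ Finset.range N, (‖ι ((T ^ j) x) u‖ₑ * nw μ u) ^ p := by
    intro u
    rw [ENNReal.iSup_mul, iSup_rpow hp]
    refine iSup_le fun j => ?_
    rw [← pow_mod_apply_of_pow_apply_eq hx]
    exact Finset.single_le_sum (f := fun j => (‖ι ((T ^ j) x) u‖ₑ * nw μ u) ^ p)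
      (fun _ _ => zero_le) (Finset.mem_range.2 (Nat.mod_lt j hN))
  have hfin : ∑' u, ∑ j ∈ Finset.range N, (‖ι ((T ^ j) x) u‖ₑ * nw μ u) ^ p ≠ ⊤ := by
    rw [Summable.tsum_finsetSum fun _ _ => ENNReal.summable]
    simp_rw [← hX.enorm_rpow hp]
    exact ENNReal.sum_ne_top.2 fun j _ => ENNReal.rpow_ne_top_of_nonneg hp.le enorm_ne_top
  refine ne_top_of_le_ne_top hfin (le_trans ?_ (ENNReal.tsum_le_tsum hle))
  exact ENNReal.tsum_comp_le_tsum_of_injective Subtype.val_injective _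

lemma IsLpSpaceRep.cpC_lt_top_of_isPeriodicPoint (hX : IsLpSpaceRep ι μ p) (hp : 1 < p)
    (hT : IsShiftRep par (fun _ => (1 : 𝕜)) ι T) (hx : IsPeriodicPoint T x) {v : V}
    (hv : AcyclicAt par v) (hxv : ι x v ≠ 0) : cpC (children par) (nw μ) p v < ⊤ := by
  have hp0 : 0 < p := by linarith
  obtain ⟨N, hN, hx⟩ := hx
  have hbound := cpC_mul_le_energyOff (w := nw μ) hp hv (iSup_enorm_orbit_le_tsum_children hT hN hx)
  have hpos : ⨆ j, ‖ι ((T ^ j) x) v‖ₑ ≠ 0 := fun h =>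
    hxv (by simpa using ENNReal.iSup_eq_zero.1 h 0)
  refine lt_top_iff_ne_top.2 fun htop => ?_
  rw [htop, ENNReal.top_mul hpos, top_le_iff] at hbound
  exact ENNReal.rpow_ne_top_of_nonneg (by positivity)
    (hX.energyOff_iSup_orbit_ne_top hp0 hN hx v) hbound

end PeriodicPoints

/-! ### The trees `V_-^N(v)` -/

section MinusTree

variable {V : Type*} {F : V → V} {v : V}

/-- Along the orbit `v, F v, F² v, …` step back by one (`none` at `v`); off the orbit do nothing. -/
noncomputable def orbitPred (F : V → V) (v : V) : V → Option V :=
  Function.extend (fun n => F^[n] v) (fun n => n.casesOn none fun m => some (F^[m] v)) some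

/-- The parent function of `V_-^N(v)` for `F = par^N`: the spine `v, F v, F² v, …` is traversed
backwards, and the branches leaving it at `F^(n+1) v` are attached to `F^n v` instead. -/
noncomputable def minusPar (F : V → V) (v u : V) : Option V :=
  if ∃ n, F^[n] v = u then orbitPred F v u else orbitPred F v (F u)

lemma orbitPred_of_forall_ne {w : V} (hw : ∀ n, F^[n] v ≠ w) : orbitPred F v w = some w :=
  Function.extend_apply' _ _ _ fun ⟨n, hn⟩ => hw n hn

lemma orbitPred_self (hinj : Function.Injective fun n => F^[n] v) : orbitPred F v v = none :=
  hinj.extend_apply _ _ 0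

lemma orbitPred_iterate_succ (hinj : Function.Injective fun n => F^[n] v) (n : ℕ) :
    orbitPred F v (F^[n + 1] v) = some (F^[n] v) :=
  hinj.extend_apply _ _ (n + 1)

lemma orbitPred_eq_some_iterate (hinj : Function.Injective fun n => F^[n] v) {w : V} {n : ℕ} :
    orbitPred F v w = some (F^[n] v) ↔ w = F^[n + 1] v := by
  refine ⟨fun h => ?_, fun h => h ▸ orbitPred_iterate_succ hinj n⟩
  by_cases hw : ∃ m, F^[m] v = w
  · obtain ⟨m, rfl⟩ := hw
    rcases m with _ | m
    · simp [orbitPred_self hinj] at h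
    · rw [orbitPred_iterate_succ hinj, Option.some_inj] at h
      rw [hinj h]
  · push Not at hw
    rw [orbitPred_of_forall_ne hw, Option.some_inj] at h
    exact absurd h.symm (hw n)

lemma orbitPred_eq_some_of_forall_ne (hinj : Function.Injective fun n => F^[n] v) {w x : V}
    (hw : ∀ n, F^[n] v ≠ w) : orbitPred F v x = some w ↔ x = w := by
  refine ⟨fun h => ?_, by rintro rfl; exact orbitPred_of_forall_ne hw⟩
  by_cases hx : ∃ m, F^[m] v = x
  · obtain ⟨m, rfl⟩ := hx
    rcases m with _ | m
    · simp [orbitPred_self hinj] at h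
    · rw [orbitPred_iterate_succ hinj, Option.some_inj] at h
      exact absurd h (hw m)
  · push Not at hx
    rwa [orbitPred_of_forall_ne hx, Option.some_inj] at h

lemma minusPar_self (hinj : Function.Injective fun n => F^[n] v) : minusPar F v v = none := by
  rw [minusPar, if_pos ⟨0, rfl⟩, orbitPred_self hinj]

lemma minusPar_eq_none_of_apply_eq (hinj : Function.Injective fun n => F^[n] v) {u : V}
    (hu : F u = v) : minusPar F v u = none := by
  rw [minusPar, if_neg, hu, orbitPred_self hinj]
  rintro ⟨n, rfl⟩
  rw [← Function.iterate_succ_apply' F] at hu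
  exact absurd (hinj (a₁ := n + 1) (a₂ := 0) hu) n.succ_ne_zero

lemma children_minusPar_of_forall_ne (hinj : Function.Injective fun n => F^[n] v) {w : V}
    (hw : ∀ n, F^[n] v ≠ w) : children (minusPar F v) w = F ⁻¹' {w} := by
  ext u
  rw [children, Set.mem_ofPred_eq, minusPar, Set.mem_preimage, Set.mem_singleton_iff]
  split_ifs with hu
  · obtain ⟨n, rfl⟩ := hu
    rw [orbitPred_eq_some_of_forall_ne hinj hw, ← Function.iterate_succ_apply' F]
    exact iff_of_false (hw n) (hw (n + 1))
  · exact orbitPred_eq_some_of_forall_ne hinj hw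

lemma children_minusPar_iterate (hinj : Function.Injective fun n => F^[n] v) (n : ℕ) :
    children (minusPar F v) (F^[n] v) =
      insert (F^[n + 1] v) (F ⁻¹' {F^[n + 1] v} \ {F^[n] v}) := by
  ext u
  rw [children, Set.mem_ofPred_eq, minusPar, Set.mem_insert_iff, Set.mem_sdiff, Set.mem_preimage,
    Set.mem_singleton_iff, Set.mem_singleton_iff]
  split_ifs with hu
  · obtain ⟨m, rfl⟩ := hu
    rw [orbitPred_eq_some_iterate hinj, ← Function.iterate_succ_apply' F]
    simp only [hinj.eq_iff (a := m) (b := n + 1), hinj.eq_iff (a := m + 1) (b := n + 1),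
      hinj.eq_iff (a := m) (b := n)]
    omega
  · rw [orbitPred_eq_some_iterate hinj]
    have hne : ∀ m, u ≠ F^[m] v := fun m h => hu ⟨m, h.symm⟩
    simp only [hne, false_or, not_false_eq_true, and_true]

lemma childrenMinus_eq_children_minusPar {par : V → Option V} {P : V → V}
    (hP : ∀ n u, parIter par n u = some (P^[n] u)) {N : ℕ}
    (hinj : Function.Injective fun n => (P^[N])^[n] v) :
    childrenMinus par v N = children (minusPar P^[N] v) := by
  have hpow : ∀ n, P^[n * N] v = (P^[N])^[n] v := fun n => by
    rw [mul_comm, Function.iterate_mul]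
  funext w
  by_cases hw : ∃ n, (P^[N])^[n] v = w
  · obtain ⟨n, rfl⟩ := hw
    rw [children_minusPar_iterate hinj]
    ext u
    simp only [childrenMinus, spine, hP, hpow, Set.mem_ofPred_eq, Option.some_inj,
      Set.mem_insert_iff, Set.mem_sdiff, Set.mem_preimage, Set.mem_singleton_iff,
      hinj.eq_iff (b := n), exists_eq, not_true_eq_false, false_and, false_or, exists_eq_left,
      exists_eq_left', eq_comm (a := u) (b := (P^[N])^[n + 1] v)]
  · rw [children_minusPar_of_forall_ne hinj (by simpa using hw)]
    ext u
    simp only [childrenMinus, spine, hP, hpow, Set.mem_ofPred_eq, Option.some_inj,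
      Set.mem_preimage, Set.mem_singleton_iff]
    grind

lemma children_minusPar_nonempty (hinj : Function.Injective fun n => F^[n] v)
    (hF : Function.Surjective F) (w : V) : (children (minusPar F v) w).Nonempty := by
  by_cases hw : ∃ n, F^[n] v = w
  · obtain ⟨n, rfl⟩ := hw
    rw [children_minusPar_iterate hinj]
    exact Set.insert_nonempty _ _
  · rw [children_minusPar_of_forall_ne hinj (by simpa using hw)]
    exact hF w

lemma tsum_children_minusPar_ne_top (hinj : Function.Injective fun n => F^[n] v)
    {a : V → ℝ≥0∞} (ha : ∀ u, a u ≠ ⊤) (hF : ∀ w, ∑' u : ↥(F ⁻¹' {w}), a u ≠ ⊤) (w : V) :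
    ∑' u : ↥(children (minusPar F v) w), a u ≠ ⊤ := by
  by_cases hw : ∃ n, F^[n] v = w
  · obtain ⟨n, rfl⟩ := hw
    rw [children_minusPar_iterate hinj, Set.insert_eq]
    refine ne_top_of_le_ne_top ?_ (ENNReal.tsum_union_le a _ _)
    rw [tsum_singleton]
    refine ENNReal.add_ne_top.2 ⟨ha _, ne_top_of_le_ne_top (hF (F^[n + 1] v)) ?_⟩
    exact ENNReal.tsum_mono_subtype a Set.sdiff_subset
  · rw [children_minusPar_of_forall_ne hinj (by simpa using hw)]
    exact hF w

end MinusTree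

section SpineTwist

variable {V E : Type*} [AddCommGroup E] {F : V → V} {v : V}

/-- Change the sign of `x` off the spine `v, F v, F² v, …`. This turns vectors that reproduce
themselves by summation over the fibers of `F` into flows on the tree with parent function
`minusPar F v`. -/
noncomputable def spineTwist (F : V → V) (v : V) (x : V → E) (u : V) : E :=
  if ∃ n, F^[n] v = u then x u else -x u

lemma spineTwist_iterate (x : V → E) (n : ℕ) : spineTwist F v x (F^[n] v) = x (F^[n] v) :=
  if_pos ⟨n, rfl⟩

lemma spineTwist_of_forall_ne (x : V → E) {u : V} (hu : ∀ n, F^[n] v ≠ u) :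
    spineTwist F v x u = -x u :=
  if_neg (by simpa using hu)

lemma spineTwist_spineTwist (x : V → E) : spineTwist F v (spineTwist F v x) = x := by
  funext u
  simp only [spineTwist]
  split_ifs <;> simp

lemma enorm_spineTwist {E : Type*} [NormedAddCommGroup E] (x : V → E) (u : V) :
    ‖spineTwist F v x u‖ₑ = ‖x u‖ₑ := by
  rw [spineTwist]
  split_ifs <;> simp

lemma indicator_children_minusPar_iterate (hinj : Function.Injective fun n => F^[n] v)
    (x : V → E) (n : ℕ) :
    (children (minusPar F v) (F^[n] v)).indicator (spineTwist F v x) =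
      Pi.single (F^[n] v) (x (F^[n] v)) + Pi.single (F^[n + 1] v) (x (F^[n + 1] v)) -
        (F ⁻¹' {F^[n + 1] v}).indicator x := by
  have hF : ∀ m, F (F^[m] v) = F^[n + 1] v ↔ m = n := fun m => by
    rw [← Function.iterate_succ_apply' F]
    exact hinj.eq_iff.trans Nat.succ_inj
  funext u
  rw [children_minusPar_iterate hinj]
  by_cases hu : ∃ m, F^[m] v = u
  · obtain ⟨m, rfl⟩ := hu
    have hm : ∀ k, F^[m] v = F^[k] v ↔ m = k := fun k => hinj.eq_iff
    simp only [Set.indicator_apply, Set.mem_insert_iff, Set.mem_sdiff, Set.mem_preimage,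
      Set.mem_singleton_iff, hF, hm, Pi.add_apply, Pi.sub_apply, Pi.single_apply,
      spineTwist_iterate]
    grind
  · have hne : ∀ k, u ≠ F^[k] v := fun k h => hu ⟨k, h.symm⟩
    simp only [Set.indicator_apply, Set.mem_insert_iff, Set.mem_sdiff, Set.mem_preimage,
      Set.mem_singleton_iff, hne, Pi.add_apply, Pi.sub_apply, Pi.single_apply,
      spineTwist_of_forall_ne x fun n => (hne n).symm]
    grind

variable [TopologicalSpace E] [IsTopologicalAddGroup E]

lemma hasSum_children_minusPar_iff_of_forall_ne (hinj : Function.Injective fun n => F^[n] v)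
    (x : V → E) {w : V} (hw : ∀ n, F^[n] v ≠ w) :
    HasSum ((children (minusPar F v) w).indicator (spineTwist F v x)) (spineTwist F v x w) ↔
      HasSum ((F ⁻¹' {w}).indicator x) (x w) := by
  have hind : (F ⁻¹' {w}).indicator (spineTwist F v x) = -(F ⁻¹' {w}).indicator x := by
    rw [← Set.indicator_neg']
    refine Set.indicator_congr fun u hu => spineTwist_of_forall_ne x ?_
    rintro n rfl
    exact hw (n + 1) (by rwa [Function.iterate_succ_apply'])
  rw [children_minusPar_of_forall_ne hinj hw, hind, spineTwist_of_forall_ne x hw]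
  exact ⟨fun h => by simpa using h.neg, fun h => h.neg⟩

lemma hasSum_children_minusPar_iff_iterate (hinj : Function.Injective fun n => F^[n] v)
    (x : V → E) (n : ℕ) :
    HasSum ((children (minusPar F v) (F^[n] v)).indicator (spineTwist F v x))
        (spineTwist F v x (F^[n] v)) ↔
      HasSum ((F ⁻¹' {F^[n + 1] v}).indicator x) (x (F^[n + 1] v)) := by
  have hsingle := (hasSum_pi_single (F^[n] v) (x (F^[n] v))).add
    (hasSum_pi_single (F^[n + 1] v) (x (F^[n + 1] v)))
  rw [indicator_children_minusPar_iterate hinj, spineTwist_iterate]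
  refine ⟨fun h => ?_, fun h => ?_⟩
  · simpa using hsingle.sub h
  · have hsub := hsingle.sub h
    rw [add_sub_cancel_right] at hsub
    exact hsub

lemma hasSum_children_minusPar_iff (hinj : Function.Injective fun n => F^[n] v) (x : V → E) :
    (∀ w, HasSum ((children (minusPar F v) w).indicator (spineTwist F v x))
        (spineTwist F v x w)) ↔
      ∀ w ≠ v, HasSum ((F ⁻¹' {w}).indicator x) (x w) := by
  refine ⟨fun h w hwv => ?_, fun h w => ?_⟩
  all_goals by_cases hw : ∃ n, F^[n] v = w
  · obtain ⟨_ | n, rfl⟩ := hw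
    · exact absurd rfl hwv
    · exact (hasSum_children_minusPar_iff_iterate hinj x n).1 (h _)
  · push Not at hw
    exact (hasSum_children_minusPar_iff_of_forall_ne hinj x hw).1 (h w)
  · obtain ⟨n, rfl⟩ := hw
    refine (hasSum_children_minusPar_iff_iterate hinj x n).2 (h _ fun heq => ?_)
    exact absurd (hinj (a₁ := n + 1) (a₂ := 0) heq) n.succ_ne_zero
  · push Not at hw
    exact (hasSum_children_minusPar_iff_of_forall_ne hinj x hw).2 (h w (hw 0).symm)

end SpineTwist

/-! ### Flows and vectors -/

section FlowVectors

variable {𝕜 V X : Type*} [RCLike 𝕜] [NormedAddCommGroup X] [NormedSpace 𝕜 X]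
  {ι : X →ₗ[𝕜] V → 𝕜} {μ : V → 𝕜} {p : ℝ}

lemma eq_of_parIter_eq_some {q : V → Option V} {u v : V} {k : ℕ} (hu : q u = none)
    (h : parIter q k u = some v) : u = v := by
  cases k <;> simp_all [parIter]

lemma hasSum_ofReal_toReal {α : Type*} {f : α → ℝ≥0∞} (hf : ∑' a, f a ≠ ⊤) :
    HasSum (fun a => (((f a).toReal : ℝ) : 𝕜)) ((∑' a, f a).toReal : ℝ) :=
  (RCLike.hasSum_ofReal 𝕜).2 <| ENNReal.tsum_toReal_eq (ENNReal.ne_top_of_tsum_ne_top hf) ▸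
    ENNReal.hasSum_toReal hf

lemma exists_unitFlow_coeff (𝕜 : Type*) [RCLike 𝕜] {q : V → Option V} {w : V → ℝ≥0∞} {v : V}
    (hp : 1 < p) (hne : ∀ x, (children q x).Nonempty)
    (hw : ∀ x, ∑' u : ↥(children q x), w u ^ (-conjExp p) ≠ ⊤)
    (hac : AcyclicAt q v) (hv : cpC (children q) w p v ≠ ⊤) :
    ∃ f : V → 𝕜, f v = 1 ∧ (∀ u, f u ≠ 0 → ∃ k, parIter q k u = some v) ∧
      energyOff w p v (fun u => ‖f u‖ₑ) ≤ cpC (children q) w p v ^ p ∧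
      ∀ x, HasSum ((children q x).indicator f) (f x + if q v = some x then 1 else 0) := by
  have htop : ∀ u, unitFlow q w p v u ≠ ⊤ := fun u =>
    ne_top_of_le_ne_top ENNReal.one_ne_top (hac.unitFlow_le_one u)
  refine ⟨fun u => ((unitFlow q w p v u).toReal : ℝ), ?_, fun u hu => ?_, ?_, fun x => ?_⟩
  · simp only [hac.unitFlow_self, ENNReal.toReal_one, RCLike.ofReal_one]
  · refine exists_parIter_eq_of_unitFlow_ne_zero (w := w) (p := p) fun h => hu ?_
    simp only [h, ENNReal.toReal_zero, RCLike.ofReal_zero]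
  · simp only [enorm_ofReal_toReal (htop _)]
    exact energyOff_unitFlow_le hp hne hw hv hac
  · have hsum := tsum_children_unitFlow hp hne hw hv x
    have hδ : (if q v = some x then 1 else 0 : ℝ≥0∞) ≠ ⊤ := by split_ifs <;> simp
    have h := hasSum_ofReal_toReal (𝕜 := 𝕜) (f := fun u : ↥(children q x) => unitFlow q w p v u)
      (hsum ▸ ENNReal.add_ne_top.2 ⟨htop x, hδ⟩)
    rw [hsum, ENNReal.toReal_add (htop x) hδ] at h
    rw [← hasSum_subtype_iff_indicator]
    convert h using 1
    · rfl
    · split_ifs <;> simp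

lemma IsLpSpaceRep.cpC_mul_le_of_hasSum (hX : IsLpSpaceRep ι μ p) (hp : 1 < p)
    {q : V → Option V} {v : V} (hv : AcyclicAt q v) (x : X) {f : V → 𝕜}
    (hfx : ∀ u, ‖f u‖ₑ = ‖ι x u‖ₑ) (hf : ∀ w, HasSum ((children q w).indicator f) (f w)) :
    cpC (children q) (nw μ) p v * ‖ι x v‖ₑ ≤ ‖x - basisVec ι v‖ₑ := by
  have hp0 : 0 < p := by linarith
  calc cpC (children q) (nw μ) p v * ‖ι x v‖ₑ
      ≤ energyOff (nw μ) p v (fun u => ‖ι x u‖ₑ) ^ (1 / p) :=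
        cpC_mul_le_energyOff hp hv fun w => by
          simpa only [hfx, Function.comp_apply] using
            enorm_le_tsum_enorm (hasSum_subtype_iff_indicator.2 (hf w))
    _ ≤ (‖x - basisVec ι v‖ₑ ^ p) ^ (1 / p) := by
        gcongr
        exact hX.energyOff_le hp0 x v
    _ = ‖x - basisVec ι v‖ₑ := by
        rw [← ENNReal.rpow_mul, mul_one_div_cancel hp0.ne', ENNReal.rpow_one]

lemma IsPushforward.cpC_minusPar_mul_le {F : V → V} {A : X →L[𝕜] X} (hA : IsPushforward ι F A)
    (hX : IsLpSpaceRep ι μ p) (hp : 1 < p) (hμ : ∀ v, μ v ≠ 0) {v : V}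
    (hinj : Function.Injective fun n => F^[n] v) {x : X} (hx : A x = x) :
    cpC (children (minusPar F v)) (nw μ) p v * ‖ι x v‖ₑ ≤ ‖x - basisVec ι v‖ₑ := by
  refine hX.cpC_mul_le_of_hasSum hp (acyclicAt_of_eq_none (minusPar_self hinj)) x
    (enorm_spineTwist (F := F) (v := v) (ι x)) ?_
  refine (hasSum_children_minusPar_iff hinj (ι x)).2 fun w _ => ?_
  simpa only [hx] using hA.hasSum_fiber hX (by linarith) (hμ w) x

lemma exists_unitFlow_coeff_minusPar (𝕜 : Type*) [RCLike 𝕜] {F : V → V} {w : V → ℝ≥0∞} {v : V}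
    (hp : 1 < p) (hF : Function.Surjective F) (hinj : Function.Injective fun n => F^[n] v)
    (hw : ∀ u, w u ^ (-conjExp p) ≠ ⊤) (hw' : ∀ x, ∑' u : ↥(F ⁻¹' {x}), w u ^ (-conjExp p) ≠ ⊤)
    (hv : cpC (children (minusPar F v)) w p v ≠ ⊤) :
    ∃ f : V → 𝕜, f v = 1 ∧ (∀ u, F u = v → f u = 0) ∧
      energyOff w p v (fun u => ‖f u‖ₑ) ≤ cpC (children (minusPar F v)) w p v ^ p ∧
      ∀ x ≠ v, HasSum ((F ⁻¹' {x}).indicator f) (f x) := by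
  obtain ⟨f, hfv, hsupp, hfE, hf⟩ := exists_unitFlow_coeff 𝕜 hp (children_minusPar_nonempty hinj hF)
    (tsum_children_minusPar_ne_top hinj hw hw') (acyclicAt_of_eq_none (minusPar_self hinj)) hv
  simp only [minusPar_self hinj, reduceCtorEq, if_false, add_zero] at hf
  refine ⟨spineTwist F v f, (spineTwist_iterate f 0).trans hfv, fun u hFu => ?_, ?_, ?_⟩
  · rw [← enorm_eq_zero, enorm_spineTwist, enorm_eq_zero]
    by_contra hfu
    obtain ⟨k, hk⟩ := hsupp u hfu
    obtain rfl := eq_of_parIter_eq_some (minusPar_eq_none_of_apply_eq hinj hFu) hk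
    exact one_ne_zero (hinj (a₁ := 1) (a₂ := 0) hFu)
  · simpa only [enorm_spineTwist] using hfE
  · refine (hasSum_children_minusPar_iff hinj _).1 ?_
    rwa [spineTwist_spineTwist]

lemma IsPushforward.exists_apply_eq_sub_basisVec {F : V → V} {A : X →L[𝕜] X}
    (hA : IsPushforward ι F A) (hX : IsLpSpaceRep ι μ p) (hp : 1 < p) (hμ : ∀ v, μ v ≠ 0)
    (hF : Function.Surjective F) {v : V} (hinj : Function.Injective fun n => F^[n] v)
    (hv : cpC (children (minusPar F v)) (nw μ) p v ≠ ⊤) :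
    ∃ x : X, A x = x - basisVec ι v ∧
      ‖x - basisVec ι v‖ₑ ≤ cpC (children (minusPar F v)) (nw μ) p v := by
  have hp0 : 0 < p := by linarith
  obtain ⟨f, hfv, hzero, hfE, hf⟩ := exists_unitFlow_coeff_minusPar 𝕜 hp hF hinj
    (fun u => ENNReal.rpow_ne_top_of_ne_zero (nw_ne_zero (hμ u)) (nw_ne_top u))
    (hA.tsum_fiber_rpow_neg_conjExp_ne_top hX hp hμ) hv
  obtain ⟨x, rfl⟩ := hX.exists_eq_of_energyOff_ne_top hp0
    (ne_top_of_le_ne_top (ENNReal.rpow_ne_top_of_nonneg hp0.le hv) hfE)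
  refine ⟨x, hX.1 (funext fun w => ?_), ?_⟩
  · refine (hA.hasSum_fiber hX hp0 (hμ w) x).unique ?_
    rw [map_sub, Pi.sub_apply, hX.coeff_basisVec hp0]
    rcases eq_or_ne w v with rfl | hw
    · rw [hfv, Pi.single_eq_same, sub_self, Set.indicator_eq_zero'.2]
      · exact hasSum_zero
      · exact Set.disjoint_left.2 fun u hu hFu => hu (hzero u hFu)
    · rw [Pi.single_eq_of_ne hw, sub_zero]
      exact hf w hw
  · rwa [← ENNReal.rpow_le_rpow_iff hp0, hX.enorm_sub_basisVec hp0 hfv]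

end FlowVectors

/-! ### Restriction to generations -/

section Generations

variable {V : Type*} {par : V → Option V} {P : V → V} {v : V}

lemma parIter_eq_some_iterate (hP : ∀ u, par u = some (P u)) (n : ℕ) (u : V) :
    parIter par n u = some (P^[n] u) := by
  induction n generalizing u with
  | zero => rfl
  | succ n ih => rw [parIter, hP, Option.bind_some, ih, Function.iterate_succ_apply]

lemma iterate_injective_of_acyclicAt (hP : ∀ u, par u = some (P u))
    (hac : ∀ u, AcyclicAt par u) : Function.Injective fun n => P^[n] v := by
  intro m n h
  wlog hmn : m ≤ n
  · exact (this hP hac h.symm (by omega)).symm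
  obtain ⟨k, rfl⟩ := Nat.exists_eq_add_of_le' hmn
  by_contra hk
  refine hac (P^[m] v) k (by omega) ?_
  rw [parIter_eq_some_iterate hP, ← Function.iterate_add_apply]
  exact congrArg some h.symm

lemma IsDirectedTree.exists_generation (hTree : IsDirectedTree par)
    (hP : ∀ u, par u = some (P u)) (v : V) :
    ∃ G : V → ℤ, G v = 0 ∧ ∀ u, G (P u) = G u - 1 := by
  have hinj := iterate_injective_of_acyclicAt (v := v) hP hTree.acyclic
  have hconn : ∀ u, ∃ m n, P^[m] u = P^[n] v := fun u => by
    obtain ⟨m, n, w, hm, hn⟩ := hTree.connected u v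
    rw [parIter_eq_some_iterate hP, Option.some_inj] at hm hn
    exact ⟨m, n, hm.trans hn.symm⟩
  choose m n hmn using hconn
  have huniq : ∀ u a b, P^[a] u = P^[b] v → (m u : ℤ) - n u = a - b := fun u a b hab => by
    have hcross : P^[a + n u] v = P^[m u + b] v := by
      rw [Function.iterate_add_apply, ← hmn, Function.iterate_add_apply, ← hab,
        Function.Commute.iterate_iterate_self]
    have := hinj hcross
    omega
  refine ⟨fun u => m u - n u, by simpa using huniq v 0 0 rfl, fun u => ?_⟩
  have h := huniq u (m (P u) + 1) (n (P u)) (hmn (P u))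
  push_cast at h ⊢
  linarith

lemma generation_iterate {G : V → ℤ} (hG : ∀ u, G (P u) = G u - 1) (n : ℕ) (u : V) :
    G (P^[n] u) = G u - n := by
  induction n with
  | zero => simp
  | succ n ih => rw [Function.iterate_succ_apply', hG, ih]; push_cast; ring

end Generations

section Restriction

variable {𝕜 V X : Type*} [RCLike 𝕜] [NormedAddCommGroup X] [NormedSpace 𝕜 X]
  {ι : X →ₗ[𝕜] V → 𝕜} {μ : V → 𝕜} {p : ℝ}

/-- `R` is the projection of `ℓ^p(V, μ)` onto the vectors supported in `S`. -/
def IsRestriction (ι : X →ₗ[𝕜] V → 𝕜) (S : Set V) (R : X →ₗ[𝕜] X) : Prop :=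
  ∀ x, ι (R x) = S.indicator (ι x)

lemma IsLpSpaceRep.exists_isRestriction (hX : IsLpSpaceRep ι μ p) (hp : 0 < p) (S : Set V) :
    ∃ R, IsRestriction ι S R := by
  choose R hR using fun x => hX.exists_eq_indicator hp x S
  refine ⟨⟨⟨R, fun x y => hX.1 ?_⟩, fun a x => hX.1 ?_⟩, hR⟩
  · simp only [hR, map_add, Set.indicator_add']
  · simp only [hR, map_smul, RingHom.id_apply]
    exact Set.indicator_const_smul S a (ι x)

variable {S : Set V} {R : X →ₗ[𝕜] X}

lemma IsRestriction.enorm_le (hR : IsRestriction ι S R) (hX : IsLpSpaceRep ι μ p) (hp : 0 < p)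
    (x : X) : ‖R x‖ₑ ≤ ‖x‖ₑ := by
  rw [← ENNReal.rpow_le_rpow_iff hp, hX.enorm_rpow hp, hX.enorm_rpow hp, hR]
  gcongr
  exact enorm_indicator_le_enorm_self _ _

lemma IsRestriction.apply_basisVec_of_mem (hR : IsRestriction ι S R) (hX : IsLpSpaceRep ι μ p)
    (hp : 0 < p) {u : V} (hu : u ∈ S) : R (basisVec ι u) = basisVec ι u := by
  refine hX.1 ?_
  rw [hR, hX.coeff_basisVec hp, Set.indicator_eq_self, Pi.support_single_of_ne one_ne_zero]
  exact Set.singleton_subset_iff.2 hu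

lemma IsRestriction.apply_basisVec_of_notMem (hR : IsRestriction ι S R) (hX : IsLpSpaceRep ι μ p)
    (hp : 0 < p) {u : V} (hu : u ∉ S) : R (basisVec ι u) = 0 := by
  refine hX.1 ?_
  rw [hR, hX.coeff_basisVec hp, map_zero, Set.indicator_eq_zero',
    Pi.support_single_of_ne one_ne_zero]
  exact Set.disjoint_singleton_left.2 hu

lemma IsRestriction.commute (hR : IsRestriction ι S R) (hX : IsLpSpaceRep ι μ p) (hp : 0 < p)
    (hμ : ∀ v, μ v ≠ 0) {F : V → V} {A : X →L[𝕜] X} (hA : IsPushforward ι F A)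
    (hS : ∀ u, F u ∈ S ↔ u ∈ S) (x : X) : A (R x) = R (A x) := by
  refine hX.1 (funext fun w => ?_)
  have hsum := hA.hasSum_fiber hX hp (hμ w)
  refine (hsum (R x)).unique ?_
  rw [hR, hR, Set.indicator_indicator]
  by_cases hw : w ∈ S
  · rw [Set.indicator_of_mem hw, Set.inter_eq_left.2]
    · exact hsum x
    · rintro u rfl
      exact (hS u).1 hw
  · rw [Set.indicator_of_notMem hw, Set.disjoint_iff_inter_eq_empty.1, Set.indicator_empty']
    · exact hasSum_zero
    · refine Set.disjoint_left.2 ?_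
      rintro u rfl hu
      exact hw ((hS u).2 hu)

lemma IsRestriction.pow_sub_one_apply (hR : IsRestriction ι S R) (hX : IsLpSpaceRep ι μ p)
    (hp : 0 < p) (hμ : ∀ v, μ v ≠ 0) {F : V → V} {A : X →L[𝕜] X} (hA : IsPushforward ι F A)
    {x : X} {a : 𝕜} {u : V} (hx : (A - 1) x = a • basisVec ι u) {m n : ℕ} (hmn : m < n)
    (hS : ∀ y, F^[n] y ∈ S ↔ y ∈ S) (hm : ∀ j < n, F^[j] u ∈ S ↔ j = m) :
    (A ^ n - 1) (R x) = a • basisVec ι (F^[m] u) := by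
  have hmS : F^[m] u ∈ S := (hm m hmn).2 rfl
  calc (A ^ n - 1) (R x) = R ((A ^ n - 1) x) := by
        rw [sub_apply, sub_apply, map_sub, hR.commute hX hp hμ (hA.pow n) hS, one_apply_eq_self,
          one_apply_eq_self]
    _ = a • ∑ j ∈ Finset.range n, R (basisVec ι (F^[j] u)) := by
        rw [← geom_sum_mul, mul_apply_eq_comp, sum_apply, hx, map_sum, Finset.smul_sum]
        exact Finset.sum_congr rfl fun j _ => by rw [map_smul, hA.pow j, map_smul]
    _ = a • R (basisVec ι (F^[m] u)) := by
        rw [Finset.sum_eq_single_of_mem m (Finset.mem_range.2 hmn)]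
        intro j hj hjm
        refine hR.apply_basisVec_of_notMem hX hp ?_
        rwa [hm j (Finset.mem_range.1 hj)]
    _ = a • basisVec ι (F^[m] u) := by rw [hR.apply_basisVec_of_mem hX hp hmS]

end Restriction

section SmallSolutions

variable {𝕜 V X : Type*} [RCLike 𝕜] [NormedAddCommGroup X] [NormedSpace 𝕜 X]
  {ι : X →ₗ[𝕜] V → 𝕜} {μ : V → 𝕜} {p : ℝ} {P : V → V} {T : X →L[𝕜] X} {v : V} {G : V → ℤ}

lemma dvd_generation_iterate_iff (hG : ∀ u, G (P u) = G u - 1) (n : ℕ) (u : V) :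
    P^[n] u ∈ {y | (n : ℤ) ∣ G y} ↔ u ∈ {y | (n : ℤ) ∣ G y} := by
  rw [Set.mem_ofPred_eq, Set.mem_ofPred_eq, generation_iterate hG, dvd_sub_self_right]

-- Iterating `T ^ N x = x - e_v` gives `(T ^ n - 1) x = -(e_v + e_{P^N v} + e_{P^{2N} v} + ⋯)`;
-- of these terms only `e_v` survives the restriction to the generations divisible by `n`.
lemma IsPushforward.exists_pow_sub_one_apply_eq_neg_pow (hT : IsPushforward ι P T)
    (hX : IsLpSpaceRep ι μ p) (hp : 0 < p) (hμ : ∀ u, μ u ≠ 0) (hGv : G v = 0)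
    (hG : ∀ u, G (P u) = G u - 1) {N n : ℕ} (hNn : N ∣ n) (hn : 0 < n) {x : X}
    (hx : (T ^ N) x = x - basisVec ι v) :
    ∃ S, ‖S‖ₑ ≤ ‖x - basisVec ι v‖ₑ ∧ (T ^ n - 1) S = -(T ^ n) (basisVec ι v) := by
  obtain ⟨R, hR⟩ := hX.exists_isRestriction hp {u | (n : ℤ) ∣ G u}
  have hRv : R (basisVec ι v) = basisVec ι v :=
    hR.apply_basisVec_of_mem hX hp (by simp [hGv])
  refine ⟨R (x - basisVec ι v), hR.enorm_le hX hp _, ?_⟩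
  have hRx : (T ^ n - 1) (R x) = -basisVec ι v := by
    obtain ⟨M, rfl⟩ := hNn
    have hx' : (T ^ N - 1) x = (-1 : 𝕜) • basisVec ι v := by
      rw [sub_apply, hx, one_apply_eq_self, sub_sub_cancel_left, neg_one_smul]
    rw [pow_mul, hR.pow_sub_one_apply hX hp hμ (hT.pow N) hx' (m := 0)
      (Nat.pos_of_mul_pos_left hn), neg_one_smul, Function.iterate_zero_apply]
    · intro y
      rw [← Function.iterate_mul]
      exact dvd_generation_iterate_iff hG _ y
    · intro j hj
      rw [← Function.iterate_mul, Set.mem_ofPred_eq, generation_iterate hG, hGv, zero_sub, dvd_neg,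
        Int.natCast_dvd_natCast, Nat.mul_dvd_mul_iff_left (Nat.pos_of_mul_pos_right hn)]
      exact ⟨fun h => Nat.eq_zero_of_dvd_of_lt h hj, fun h => h ▸ dvd_zero M⟩
  rw [map_sub, hRv, map_sub, hRx, sub_apply, one_apply_eq_self]
  abel

lemma IsPushforward.pow_sub_one_apply_eq_basisVec (hT : IsPushforward ι P T)
    (hX : IsLpSpaceRep ι μ p) (hp : 0 < p) (hμ : ∀ u, μ u ≠ 0) (hGv : G v = 0)
    (hG : ∀ u, G (P u) = G u - 1) {n : ℕ} {x : X} (hx : T x = x + basisVec ι (P v))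
    {R : X →ₗ[𝕜] X} (hR : IsRestriction ι {u | ((n + 1 : ℕ) : ℤ) ∣ G u} R) :
    (T ^ (n + 1) - 1) (R (x - basisVec ι v)) = basisVec ι v := by
  have hRv : R (basisVec ι v) = basisVec ι v :=
    hR.apply_basisVec_of_mem hX hp (by simp [hGv])
  have hx' : (T - 1) x = (1 : 𝕜) • basisVec ι (P v) := by
    rw [sub_apply, hx, one_apply_eq_self, add_sub_cancel_left, one_smul]
  have hRx : (T ^ (n + 1) - 1) (R x) = (T ^ (n + 1)) (basisVec ι v) := by
    rw [hR.pow_sub_one_apply hX hp hμ hT hx' n.lt_succ_self (dvd_generation_iterate_iff hG _),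
      one_smul, hT.pow, Function.iterate_succ_apply]
    intro j hj
    rw [Set.mem_ofPred_eq, generation_iterate hG, hG, hGv, zero_sub, ← neg_add', dvd_neg]
    norm_cast
    rw [add_comm 1 j]
    refine ⟨fun h => ?_, fun h => h ▸ dvd_rfl⟩
    have := Nat.le_of_dvd j.succ_pos h
    omega
  rw [map_sub, hRv, map_sub, hRx, sub_apply, one_apply_eq_self, sub_sub_cancel]

end SmallSolutions

section Chaos

variable {𝕜 V X : Type*} [RCLike 𝕜] [NormedAddCommGroup X] [NormedSpace 𝕜 X]
  {ι : X →ₗ[𝕜] V → 𝕜} {μ : V → 𝕜} {p : ℝ} {par : V → Option V} {P : V → V} {T : X →L[𝕜] X}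
  {v : V} {l : Filter ℕ}

lemma iterate_iterate_injective (hinj : Function.Injective fun n => P^[n] v) {N : ℕ} (hN : 1 ≤ N) :
    Function.Injective fun n => (P^[N])^[n] v := by
  simp only [← Function.iterate_mul]
  exact hinj.comp (mul_right_injective₀ (Nat.one_le_iff_ne_zero.1 hN))

lemma IsPushforward.basisVec_mem_smallSolutions_neg_pow (hT : IsPushforward ι P T)
    (hX : IsLpSpaceRep ι μ p) (hp : 1 < p) (hμ : ∀ u, μ u ≠ 0) (hTree : IsDirectedTree par)
    (hP : ∀ u, par u = some (P u)) (hsurj : Function.Surjective P)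
    (hl : ∀ N ≥ 1, ∀ᶠ n in l, 0 < n ∧ N ∣ n)
    (hv : ∀ ε : ℝ, 0 < ε → ∃ N : ℕ, 1 ≤ N ∧
      cpC (childrenMinus par v N) (nw μ) p v < ENNReal.ofReal ε) :
    basisVec ι v ∈ smallSolutions l (fun n => T ^ n - 1) fun n => -T ^ n := by
  have hp0 : 0 < p := by linarith
  obtain ⟨G, hGv, hG⟩ := hTree.exists_generation hP v
  refine mem_smallSolutions.2 fun ε hε => ?_
  obtain ⟨N, hN, hlt⟩ := hv ε hε
  have hinj :=
    iterate_iterate_injective (iterate_injective_of_acyclicAt (v := v) hP hTree.acyclic) hN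
  rw [childrenMinus_eq_children_minusPar (parIter_eq_some_iterate hP) hinj] at hlt
  obtain ⟨x, hx, hxle⟩ := (hT.pow N).exists_apply_eq_sub_basisVec hX hp hμ (hsurj.iterate N)
    hinj hlt.ne_top
  filter_upwards [hl N hN] with n ⟨hn, hNn⟩
  obtain ⟨S, hS, hTS⟩ :=
    hT.exists_pow_sub_one_apply_eq_neg_pow hX hp0 hμ hGv hG hNn hn hx
  refine ⟨S, ?_, hTS⟩
  have hSε := (hS.trans hxle).trans_lt hlt
  rwa [← ofReal_norm, ENNReal.ofReal_lt_ofReal_iff hε] at hSε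

lemma IsPushforward.exists_apply_eq_add_basisVec (hT : IsPushforward ι P T)
    (hX : IsLpSpaceRep ι μ p) (hp : 1 < p) (hμ : ∀ u, μ u ≠ 0) (hP : ∀ u, par u = some (P u))
    (hsurj : Function.Surjective P) (hac : AcyclicAt par v)
    (hv : cpC (children par) (nw μ) p v ≠ ⊤) :
    ∃ x : X, ι x v = 1 ∧ T x = x + basisVec ι (P v) ∧ ∀ u, ι x u ≠ 0 → ∃ k, P^[k] u = v := by
  have hp0 : 0 < p := by linarith
  have hchildren : ∀ w, children par w = P ⁻¹' {w} := fun w => by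
    ext u
    simp [children, hP]
  obtain ⟨f, hfv, hsupp, hfE, hf⟩ := exists_unitFlow_coeff 𝕜 hp
    (fun w => hchildren w ▸ hsurj w)
    (fun w => hchildren w ▸ hT.tsum_fiber_rpow_neg_conjExp_ne_top hX hp hμ w) hac hv
  obtain ⟨x, rfl⟩ := hX.exists_eq_of_energyOff_ne_top hp0
    (ne_top_of_le_ne_top (ENNReal.rpow_ne_top_of_nonneg hp0.le hv) hfE)
  refine ⟨x, hfv, hX.1 (funext fun w => ?_), fun u hu => ?_⟩
  · refine (hT.hasSum_fiber hX hp0 (hμ w) x).unique ?_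
    rw [← hchildren]
    convert hf w using 1
    simp [hX.coeff_basisVec hp0, hP, Pi.single_apply, eq_comm]
  · simpa only [parIter_eq_some_iterate hP, Option.some_inj] using hsupp u hu

lemma IsLpSpaceRep.tendsto_enorm_of_isRestriction (hX : IsLpSpaceRep ι μ p) (hp : 0 < p)
    {S : ℕ → Set V} {R : ℕ → X →ₗ[𝕜] X} (hR : ∀ n, IsRestriction ι (S n) (R n)) {x : X}
    (hx : ∀ u, ι x u ≠ 0 → ∀ᶠ n in l, u ∉ S n) :
    Tendsto (fun n => ‖R n x‖ₑ) l (𝓝 0) := by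
  have hpow : ∀ n, ‖R n x‖ₑ ^ p = ∑' u, (‖(S n).indicator (ι x) u‖ₑ * nw μ u) ^ p := fun n => by
    rw [hX.enorm_rpow hp, hR n]
  have hlim : Tendsto (fun n => ‖R n x‖ₑ ^ p) l (𝓝 0) := by
    simp only [hpow]
    refine tendsto_tsum_zero_of_eventually_eq_zero (a := fun u => (‖ι x u‖ₑ * nw μ u) ^ p)
      ?_ (fun n u => ?_) fun u => ?_
    · rw [← hX.enorm_rpow hp]
      exact ENNReal.rpow_ne_top_of_nonneg hp.le enorm_ne_top
    · gcongr
      exact enorm_indicator_le_enorm_self _ _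
    · rcases eq_or_ne (ι x u) 0 with hu | hu
      · simp [Set.indicator_apply, hu, hp]
      · filter_upwards [hx u hu] with n hn
        simp [hn, hp]
  have hroot := hlim.ennrpow_const (1 / p)
  rw [ENNReal.zero_rpow_of_pos (by positivity)] at hroot
  exact hroot.congr fun n => by
    rw [← ENNReal.rpow_mul, mul_one_div_cancel hp.ne', ENNReal.rpow_one]

lemma IsPushforward.basisVec_mem_smallSolutions_one (hT : IsPushforward ι P T)
    (hX : IsLpSpaceRep ι μ p) (hp : 1 < p) (hμ : ∀ u, μ u ≠ 0) (hTree : IsDirectedTree par)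
    (hP : ∀ u, par u = some (P u)) (hsurj : Function.Surjective P) (hl : l ≤ atTop)
    (hv : cpC (children par) (nw μ) p v ≠ ⊤) :
    basisVec ι v ∈ smallSolutions l (fun n => T ^ n - 1) fun _ => 1 := by
  have hp0 : 0 < p := by linarith
  obtain ⟨G, hGv, hG⟩ := hTree.exists_generation hP v
  obtain ⟨x, hxv, hx, hsupp⟩ :=
    hT.exists_apply_eq_add_basisVec hX hp hμ hP hsurj (hTree.acyclic v) hv
  choose R hR using fun n : ℕ => hX.exists_isRestriction hp0 {u | (n : ℤ) ∣ G u}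
  have hlim : Tendsto (fun n => ‖R n (x - basisVec ι v)‖ₑ) l (𝓝 0) := by
    refine hX.tendsto_enorm_of_isRestriction hp0 hR fun u hu => ?_
    have huv : u ≠ v := by
      rintro rfl
      simp [hX.coeff_basisVec hp0, hxv] at hu
    obtain ⟨k, hk⟩ := hsupp u (by simpa [hX.coeff_basisVec hp0, huv] using hu)
    have hGu : G u = k := by linarith [generation_iterate hG k u, hk ▸ hGv]
    filter_upwards [hl (eventually_gt_atTop k)] with n hn (hdvd : (n : ℤ) ∣ G u)
    rw [hGu, Int.natCast_dvd_natCast] at hdvd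
    obtain rfl := Nat.eq_zero_of_dvd_of_lt hdvd hn
    exact huv hk
  refine mem_smallSolutions.2 fun ε hε => ?_
  filter_upwards [hlim.eventually_lt_const (ENNReal.ofReal_pos.2 hε),
    hl (eventually_gt_atTop 0)] with n hn hn0
  obtain ⟨n, rfl⟩ := Nat.exists_eq_succ_of_ne_zero hn0.ne'
  refine ⟨R (n + 1) (x - basisVec ι v), ?_, ?_⟩
  · rwa [← ofReal_norm, ENNReal.ofReal_lt_ofReal_iff hε] at hn
  · exact hT.pow_sub_one_apply_eq_basisVec hX hp0 hμ hGv hG hx (hR _)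

end Chaos

section Main

variable {𝕜 V X : Type*} [RCLike 𝕜] [NormedAddCommGroup X] [NormedSpace 𝕜 X]
  {ι : X →ₗ[𝕜] V → 𝕜} {μ : V → 𝕜} {p : ℝ} {par : V → Option V} {P : V → V} {T : X →L[𝕜] X}

lemma IsLpSpaceRep.dense_span_basisVec (hX : IsLpSpaceRep ι μ p) (hp : 0 < p) :
    Dense (Submodule.span 𝕜 (Set.range (basisVec ι)) : Set X) := fun x =>
  mem_closure_of_tendsto (hX.hasSum_basisVec hp x) <| .of_forall fun _ =>
    Submodule.sum_mem _ fun u _ => Submodule.smul_mem _ _ (Submodule.subset_span ⟨u, rfl⟩)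

lemma IsPushforward.chaoticOp [CompleteSpace X] (hT : IsPushforward ι P T)
    (hX : IsLpSpaceRep ι μ p) (hp : 1 < p) (hμ : ∀ u, μ u ≠ 0) (hTree : IsDirectedTree par)
    (hP : ∀ u, par u = some (P u)) (hsurj : Function.Surjective P)
    (hc : ∀ v, cpC (children par) (nw μ) p v < ⊤)
    (hminus : ∀ v, ∀ ε : ℝ, 0 < ε → ∃ N : ℕ, 1 ≤ N ∧
      cpC (childrenMinus par v N) (nw μ) p v < ENNReal.ofReal ε) :
    ChaoticOp T := by
  have : Countable V := hTree.countable
  have hdvd : ∀ N ≥ 1, ∀ᶠ n in map Nat.factorial atTop, 0 < n ∧ N ∣ n := fun N hN =>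
    eventually_map.2 <| (eventually_ge_atTop N).mono fun n hn =>
      ⟨n.factorial_pos, Nat.dvd_factorial hN hn⟩
  refine chaoticOp_of_smallSolutions ((hdvd 1 le_rfl).mono fun n hn => hn.1)
    (Set.countable_range (basisVec ι)) (hX.dense_span_basisVec (by linarith)) ?_ ?_
  · rintro _ ⟨v, rfl⟩
    exact hT.basisVec_mem_smallSolutions_neg_pow hX hp hμ hTree hP hsurj hdvd (hminus v)
  · rintro _ ⟨v, rfl⟩
    exact hT.basisVec_mem_smallSolutions_one hX hp hμ hTree hP hsurj
      factorial_tendsto_atTop (hc v).ne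

lemma IsLpSpaceRep.exists_isPeriodicPoint_norm_sub_lt (hX : IsLpSpaceRep ι μ p) (hp : 0 < p) {v : V}
    (hμ : μ v ≠ 0) (hT : Dense {x | IsPeriodicPoint T x}) {ε : ℝ} (hε : 0 < ε) :
    ∃ x, IsPeriodicPoint T x ∧ ‖x - basisVec ι v‖ < ε * ‖ι x v‖ := by
  obtain ⟨φ, hφ⟩ := hX.exists_coord hp hμ
  have hopen : IsOpen {x | ‖x - basisVec ι v‖ < ε * ‖φ x‖} :=
    isOpen_lt (by fun_prop) (by fun_prop)
  obtain ⟨x, hx, hxT⟩ := hT.inter_open_nonempty _ hopen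
    ⟨basisVec ι v, by simpa [hφ, hX.coeff_basisVec hp] using hε⟩
  rw [Set.mem_ofPred_eq, hφ] at hx
  exact ⟨x, hxT, hx⟩

lemma IsPushforward.exists_cpC_childrenMinus_lt (hT : IsPushforward ι P T)
    (hX : IsLpSpaceRep ι μ p) (hp : 1 < p) (hμ : ∀ u, μ u ≠ 0) (hTree : IsDirectedTree par)
    (hP : ∀ u, par u = some (P u)) (hdense : Dense {x | IsPeriodicPoint T x}) (v : V) {ε : ℝ}
    (hε : 0 < ε) :
    ∃ N : ℕ, 1 ≤ N ∧ cpC (childrenMinus par v N) (nw μ) p v < ENNReal.ofReal ε := by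
  obtain ⟨x, ⟨N, hN, hx⟩, hlt⟩ :=
    hX.exists_isPeriodicPoint_norm_sub_lt (by linarith) (hμ v) hdense hε
  have hinj :=
    iterate_iterate_injective (iterate_injective_of_acyclicAt (v := v) hP hTree.acyclic) hN
  refine ⟨N, hN, ?_⟩
  rw [childrenMinus_eq_children_minusPar (parIter_eq_some_iterate hP) hinj]
  refine lt_of_mul_lt_mul_right' (a := ‖ι x v‖ₑ) ?_
  refine ((hT.pow N).cpC_minusPar_mul_le hX hp hμ hinj hx).trans_lt ?_
  rw [← ofReal_norm, ← ofReal_norm, ← ENNReal.ofReal_mul hε.le]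
  exact (ENNReal.ofReal_lt_ofReal_iff_of_nonneg (norm_nonneg _)).2 hlt

end Main

/-- Theorem 8.1 / `t-charpmubil`: on a leafless unrooted tree, the
unweighted backward shift, as an operator on `ℓ^p(V,μ)` (`1 < p < ∞`), is chaotic iff for
every vertex `v` the constant `c_p(V(v),μ)` is finite and `c_p(V_-^N(v),μ)` becomes
arbitrarily small for suitable `N ≥ 1`. -/
theorem statement13
    {𝕜 : Type*} [RCLike 𝕜] {V : Type*} (par : V → Option V) (hTree : IsDirectedTree par)
    (hUnrooted : Unrooted par) (hLeafless : Leafless par)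
    (μ : V → 𝕜) (hμ : ∀ v : V, μ v ≠ 0) (p : ℝ) (hp : 1 < p)
    {X : Type*} [NormedAddCommGroup X] [NormedSpace 𝕜 X] [CompleteSpace X]
    (ι : X →ₗ[𝕜] V → 𝕜) (hX : IsLpSpaceRep ι μ p)
    (T : X →L[𝕜] X) (hT : IsShiftRep par (fun _ : V => (1 : 𝕜)) ι T) :
    ChaoticOp T ↔
      ∀ v : V, cpC (children par) (nw μ) p v < ⊤ ∧
        ∀ ε : ℝ, 0 < ε → ∃ N : ℕ, 1 ≤ N ∧
          cpC (childrenMinus par v N) (nw μ) p v < ENNReal.ofReal ε := by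
  have hp0 : 0 < p := by linarith
  choose P hP using fun u => Option.ne_none_iff_exists'.1 (hUnrooted u)
  have hPush : IsPushforward ι P T := hT.isPushforward hP hX hp0
  have hsurj : Function.Surjective P := fun v => by
    obtain ⟨u, hu⟩ := Set.nonempty_iff_ne_empty.2 (hLeafless v)
    exact ⟨u, Option.some_inj.1 ((hP u).symm.trans hu)⟩
  refine ⟨fun h v => ⟨?_, fun ε hε => ?_⟩, fun h => ?_⟩
  · obtain ⟨x, hx, hlt⟩ := hX.exists_isPeriodicPoint_norm_sub_lt hp0 (hμ v) h.2 one_pos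
    refine hX.cpC_lt_top_of_isPeriodicPoint hp hT hx (hTree.acyclic v) fun hxv => ?_
    simp only [hxv, norm_zero, mul_zero] at hlt
    exact (norm_nonneg _).not_gt hlt
  · exact hPush.exists_cpC_childrenMinus_lt hX hp hμ hTree hP h.2 v hε
  · exact hPush.chaoticOp hX hp hμ hTree hP hsurj (fun v => (h v).1) fun v => (h v).2

end PaperTree
end
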